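/- Let F be an algebraically closed field. Fix an integer k ≥ 2, an integer m ≥ 0, and nondecreasing integer tuples e_1 ≤ … ≤ e_k and f_1 ≤ … ≤ f_k satisfying f_i ≥ e_i for all 1 ≤ i ≤ k and f_i ≥ e_{i+1} − m for all 1 ≤ i ≤ k−1; set δ = Σ_{i=1}^k (f_i − e_i). Call a pair (A, B) of k×k matrices over F[t] admissible if deg A_{i,j} ≤ f_i − e_{k+1−j} and deg B_{i,j} ≤ f_i − e_{k+1−j} + m for all i, j (with deg 0 = −∞, so an entry must be 0 when its bound is negative), A_{i,j} = 0 whenever i + j < k + 1, and B_{i,j} = 0 whenever i + j ≥ k + 1. Call an admissible pair (A', B') a restricted tangent if moreover A'_{i,k+1−i} = 0 for all 1 ≤ i ≤ k and B'_{i,k−i} = 0 for all 1 ≤ i ≤ k−1. Given an admissible pair (A, B) and a restricted tangent (A', B'), let D(A', B') ∈ F[t][x] be the unique polynomial with det((A + εA')·x + (B + εB')) = det(A·x + B) + ε·D(A', B') in (F[t][x])[ε]/(ε²). Then there exists an admissible pair (A, B) with B_{i,k−i} ≠ 0 for all 1 ≤ i ≤ k−1 such that the set {D(A', B') : (A', B')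 a restricted tangent} is exactly the set of polynomials of the form Σ_{j=1}^{k} P_j·x^j with P_j ∈ F[t], deg P_j ≤ δ + (k−j)·m for all 1 ≤ j ≤ k, P_k = 0, and P_1 divisible by ∏_{i=1}^{k−1} B_{i,k−i}. -/

import Mathlib

/-- The matrix `A·x + B` over `F[t][x]` (inner variable `t`, outer variable `x`). -/
noncomputable def xMat {F : Type*} [Field F] {k : ℕ}
    (A B : Matrix (Fin k) (Fin k) (Polynomial F)) :
    Matrix (Fin k) (Fin k) (Polynomial (Polynomial F)) :=
  Matrix.of fun r c => Polynomial.C (A r c) * Polynomial.X + Polynomial.C (B r c)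

/-- A pair `(A, B)` of `k × k` matrices over `F[t]` is admissible if
`deg A r c ≤ f r - e (k+1-c)` and `deg B r c ≤ f r - e (k+1-c) + m` (encoded via vanishing of
coefficients beyond the bound; `k+1-c` `1`-indexed is `c.rev` `0`-indexed), `A` is lower
anti-triangular (`A r c = 0` for `r + c < k + 1`, `1`-indexed) and `B` is strictly upper
anti-triangular (`B r c = 0` for `r + c ≥ k + 1`, `1`-indexed). -/
def IsAdmissible {F : Type*} [Field F] {k : ℕ} (m : ℕ) (e f : Fin k → ℤ)
    (A B : Matrix (Fin k) (Fin k) (Polynomial F)) : Prop :=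
  (∀ r c : Fin k, ∀ n : ℕ, f r - e c.rev < (n : ℤ) → (A r c).coeff n = 0) ∧
  (∀ r c : Fin k, ∀ n : ℕ, f r - e c.rev + (m : ℤ) < (n : ℤ) → (B r c).coeff n = 0) ∧
  (∀ r c : Fin k, (r : ℕ) + (c : ℕ) < k - 1 → A r c = 0) ∧
  (∀ r c : Fin k, k - 1 ≤ (r : ℕ) + (c : ℕ) → B r c = 0)

/-!
After reversing the columns, `A * x + B` becomes `x * L + U` with `L` lower triangular and `U`
strictly upper triangular. Every derivative has the asserted shape, so the point is to find `(A, B)`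
at which every such polynomial is a derivative. This goes by induction on the size, at points in
Hessenberg form whose superdiagonal entries have the largest possible degree and simple roots, all
of them distinct.

Let the new last row be `u + a * (y - u)`, where the only nonzero entry of `u` is the diagonal one,
with set of roots `s`. If the last column of the tangent is divided by `a`, then the derivative has
a limit as `a → 0`, and surjectivity of a linear map onto a finite-dimensional space persists for
some `a ≠ 0`, because an operator on such a space has only finitely many eigenvalues. In the limit,
the new row and column of the tangent prescribe the coefficient of `x`, all values at the roots
in `s`, and the values of the coefficient of `x ^ 2` at the roots of the superdiagonal entries, the
row governing some of these roots and the column the others. What remains is a multiple of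
`x * ∏ r ∈ s, (t - r)`, and the quotient is a polynomial of the asserted shape of smaller size.
-/

section MatrixDet

variable {R : Type*} [CommRing R] {k : ℕ}

lemma det_eq_mul_det_castSucc_of_row_last {M : Matrix (Fin (k + 1)) (Fin (k + 1)) R}
    (h : ∀ j : Fin k, M (Fin.last k) j.castSucc = 0) :
    M.det = M (Fin.last k) (Fin.last k) * (M.submatrix Fin.castSucc Fin.castSucc).det := by
  rw [Matrix.det_succ_row M (Fin.last k), Fin.sum_univ_castSucc,
    Finset.sum_eq_zero fun j _ => by rw [h, mul_zero, zero_mul]]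
  simp [← two_mul, pow_mul, Fin.succAbove_last]

lemma det_eq_mul_det_castSucc_of_col_last {M : Matrix (Fin (k + 1)) (Fin (k + 1)) R}
    (h : ∀ i : Fin k, M i.castSucc (Fin.last k) = 0) :
    M.det = M (Fin.last k) (Fin.last k) * (M.submatrix Fin.castSucc Fin.castSucc).det := by
  rw [← M.det_transpose, det_eq_mul_det_castSucc_of_row_last h, ← Matrix.transpose_submatrix,
    Matrix.det_transpose, Matrix.transpose_apply]

lemma submatrix_swap_last_castSucc {α : Type*} (M : Matrix (Fin (k + 1)) (Fin (k + 1)) α)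
    (i : Fin k) :
    (M.submatrix (Equiv.swap i.castSucc (Fin.last k)) id).submatrix Fin.castSucc Fin.castSucc =
      (M.submatrix Fin.castSucc Fin.castSucc).updateRow i fun j => M (Fin.last k) j.castSucc := by
  ext l j
  rcases eq_or_ne l i with rfl | hl
  · simp
  · rw [Matrix.updateRow_ne hl, Matrix.submatrix_apply, Matrix.submatrix_apply,
      Equiv.swap_apply_of_ne_of_ne (Fin.castSucc_injective k |>.ne hl) (Fin.castSucc_ne_last l)]
    rfl

lemma det_submatrix_swap_last (M : Matrix (Fin (k + 1)) (Fin (k + 1)) R) (i : Fin k) :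
    (M.submatrix (Equiv.swap i.castSucc (Fin.last k)) id).det = -M.det := by
  rw [Matrix.det_permute, Equiv.Perm.sign_swap (Fin.castSucc_ne_last i)]
  simp

lemma det_eq_neg_mul_of_row {M : Matrix (Fin (k + 1)) (Fin (k + 1)) R} {i : Fin k}
    (h : ∀ j : Fin k, M i.castSucc j.castSucc = 0) :
    M.det = -(M i.castSucc (Fin.last k) *
      ((M.submatrix Fin.castSucc Fin.castSucc).updateRow i
        fun j => M (Fin.last k) j.castSucc).det) := by
  rw [← submatrix_swap_last_castSucc, ← neg_eq_iff_eq_neg, ← det_submatrix_swap_last M i,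
    det_eq_mul_det_castSucc_of_row_last (by simpa using h)]
  simp

lemma det_eq_neg_mul_of_col {M : Matrix (Fin (k + 1)) (Fin (k + 1)) R} {i : Fin k}
    (h : ∀ l, l ≠ i.castSucc → M l (Fin.last k) = 0) :
    M.det = -(M i.castSucc (Fin.last k) *
      ((M.submatrix Fin.castSucc Fin.castSucc).updateRow i
        fun j => M (Fin.last k) j.castSucc).det) := by
  rw [← submatrix_swap_last_castSucc, ← neg_eq_iff_eq_neg, ← det_submatrix_swap_last M i,
    det_eq_mul_det_castSucc_of_col_last]
  · simp
  · refine fun l => h _ fun hl => ?_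
    rw [Equiv.swap_apply_eq_iff, Equiv.swap_apply_left] at hl
    exact Fin.castSucc_ne_last l hl

lemma det_eq_corner_mul_prod_superdiag {M : Matrix (Fin (k + 1)) (Fin (k + 1)) R}
    (h : ∀ (i : Fin k) (j : Fin (k + 1)), j ≤ i.castSucc → M i.castSucc j = 0) :
    M.det = (-1) ^ k * (M (Fin.last k) 0 * ∏ i : Fin k, M i.castSucc i.succ) := by
  rw [Matrix.det_succ_column_zero, Fin.sum_univ_castSucc,
    Finset.sum_eq_zero fun i _ => by rw [h i 0 (Fin.zero_le _), mul_zero, zero_mul], zero_add,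
    Fin.succAbove_last, Matrix.det_of_isUpperTriangular, mul_assoc]
  · simp
  · exact fun i j hij => h i j.succ (Fin.succ_le_castSucc_iff.mpr hij)

end MatrixDet

section PencilDet

open Polynomial

variable {R : Type*} [CommRing R] {k : ℕ}

/-- The matrix `x * L + U` over `R[x]`, where `L` is the lower triangular part (with the diagonal)
and `U` the strictly upper triangular part of the leading `k × k` block of `S`. The array `S` is
indexed by `ℕ`, so that blocks of different sizes can be cut out of the same array. -/
noncomputable def pencil (k : ℕ) (S : ℕ → ℕ → R) : Matrix (Fin k) (Fin k) R[X] :=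
  Matrix.of fun i j => monomial (if (j : ℕ) ≤ i then 1 else 0) (S i j)

/-- The determinant of `pencil k S`. -/
noncomputable def pencilDet (k : ℕ) (S : ℕ → ℕ → R) : R[X] := (pencil k S).det

lemma pencil_of_le (S : ℕ → ℕ → R) {i j : Fin k} (h : (j : ℕ) ≤ i) :
    pencil k S i j = X * C (S i j) := by
  rw [pencil, Matrix.of_apply, if_pos h, ← C_mul_X_eq_monomial, mul_comm]

lemma pencil_of_lt (S : ℕ → ℕ → R) {i j : Fin k} (h : (i : ℕ) < j) :
    pencil k S i j = C (S i j) := by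
  rw [pencil, Matrix.of_apply, if_neg h.not_ge, monomial_zero_left]

lemma pencil_eq_zero {S : ℕ → ℕ → R} {i j : Fin k} (h : S i j = 0) : pencil k S i j = 0 := by
  rw [pencil, Matrix.of_apply, h, monomial_zero_right]

lemma pencil_last (S : ℕ → ℕ → R) (j : Fin (k + 1)) :
    pencil (k + 1) S (Fin.last k) j = X * C (S k j) :=
  pencil_of_le S (Fin.le_last j)

lemma pencilDet_congr {S S' : ℕ → ℕ → R} (h : ∀ i < k, ∀ j < k, S i j = S' i j) :
    pencilDet k S = pencilDet k S' := by
  refine congrArg Matrix.det (Matrix.ext fun i j => ?_)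
  rw [pencil, pencil, Matrix.of_apply, Matrix.of_apply, h i i.2 j j.2]

lemma pencilDet_map {R' : Type*} [CommRing R'] (φ : R →+* R') (k : ℕ) (S : ℕ → ℕ → R) :
    (pencilDet k S).map φ = pencilDet k fun i j => φ (S i j) := by
  rw [pencilDet, ← coe_mapRingHom, RingHom.map_det]
  refine congrArg Matrix.det (Matrix.ext fun i j => ?_)
  simp only [pencil, RingHom.mapMatrix_apply, Matrix.map_apply, Matrix.of_apply, coe_mapRingHom,
    map_monomial]

lemma pencil_update {i : ℕ} (hi : i < k) (S : ℕ → ℕ → R) (z : ℕ → R) :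
    pencil k (Function.update S i z) = (pencil k S).updateRow ⟨i, hi⟩
      fun j => monomial (if (j : ℕ) ≤ i then 1 else 0) (z j) := by
  ext l j : 2
  rcases eq_or_ne l ⟨i, hi⟩ with rfl | hl
  · rw [Matrix.updateRow_self, pencil, Matrix.of_apply, Function.update_self]
  · rw [Matrix.updateRow_ne hl, pencil, pencil, Matrix.of_apply, Matrix.of_apply,
      Function.update_of_ne fun h => hl (Fin.ext h)]

lemma pencilDet_update_add {i : ℕ} (hi : i < k) (S : ℕ → ℕ → R) (z z' : ℕ → R) :
    pencilDet k (Function.update S i (z + z')) =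
      pencilDet k (Function.update S i z) + pencilDet k (Function.update S i z') := by
  simp only [pencilDet, pencil_update hi]
  rw [← Matrix.det_updateRow_add]
  simp only [Pi.add_def, map_add]

lemma pencilDet_update_smul {i : ℕ} (hi : i < k) (S : ℕ → ℕ → R) (c : R) (z : ℕ → R) :
    pencilDet k (Function.update S i (c • z)) = c • pencilDet k (Function.update S i z) := by
  rw [smul_eq_C_mul]
  simp only [pencilDet, pencil_update hi]
  rw [← Matrix.det_updateRow_smul]
  simp only [Pi.smul_def, smul_eq_mul, C_mul_monomial]

lemma pencilDet_eq_zero_of_row {i : ℕ} (hi : i < k) {S : ℕ → ℕ → R}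
    (h : ∀ j < k, S i j = 0) : pencilDet k S = 0 :=
  Matrix.det_eq_zero_of_row_eq_zero ⟨i, hi⟩ fun j => pencil_eq_zero (h j j.2)

lemma pencil_eq_smul_add (k : ℕ) (S : ℕ → ℕ → R) :
    pencil k S = (X : R[X]) •
        (Matrix.of fun i j : Fin k => if (j : ℕ) ≤ i then S i j else 0).map C +
      (Matrix.of fun i j : Fin k => if (j : ℕ) ≤ i then 0 else S i j).map C := by
  ext i j : 2
  rcases le_or_gt (j : ℕ) i with h | h
  · simp [pencil_of_le S h, -Fin.val_fin_le, h]
  · simp [pencil_of_lt S h, -Fin.val_fin_le, h.not_ge]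

lemma coeff_pencilDet_card (k : ℕ) (S : ℕ → ℕ → R) :
    (pencilDet k S).coeff k = ∏ i ∈ Finset.range k, S i i := by
  have h := coeff_det_X_add_C_card
    (Matrix.of fun i j : Fin k => if (j : ℕ) ≤ i then S i j else 0)
    (Matrix.of fun i j : Fin k => if (j : ℕ) ≤ i then 0 else S i j)
  rw [← pencil_eq_smul_add, Fintype.card_fin] at h
  rw [pencilDet, h, Matrix.det_of_isLowerTriangular, ← Fin.prod_univ_eq_prod_range fun i => S i i]
  · simp
  · exact fun i j hij => if_neg (not_le_of_gt (Fin.lt_def.mp hij))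

lemma coeff_pencilDet_eq_zero {n : ℕ} (hn : k < n) (S : ℕ → ℕ → R) :
    (pencilDet k S).coeff n = 0 := by
  refine coeff_eq_zero_of_natDegree_lt (lt_of_le_of_lt ?_ hn)
  have h := natDegree_det_X_add_C_le
    (Matrix.of fun i j : Fin k => if (j : ℕ) ≤ i then S i j else 0)
    (Matrix.of fun i j : Fin k => if (j : ℕ) ≤ i then 0 else S i j)
  rwa [← pencil_eq_smul_add, Fintype.card_fin] at h

lemma pencilDet_eq_X_mul (k : ℕ) (S : ℕ → ℕ → R) :
    pencilDet (k + 1) S =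
      X * ((pencil (k + 1) S).updateRow (Fin.last k) fun j => C (S k j)).det := by
  have h : (pencil (k + 1) S).row (Fin.last k) = (X : R[X]) • fun j : Fin (k + 1) => C (S k j) :=
    funext fun j => pencil_last S j
  rw [← Matrix.det_updateRow_smul, ← h]
  exact congrArg Matrix.det (Matrix.updateRow_eq_self _ _).symm

lemma coeff_pencilDet_zero (k : ℕ) (S : ℕ → ℕ → R) : (pencilDet (k + 1) S).coeff 0 = 0 := by
  rw [pencilDet_eq_X_mul, coeff_X_mul_zero]

lemma coeff_pencilDet_one (k : ℕ) (S : ℕ → ℕ → R) :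
    (pencilDet (k + 1) S).coeff 1 =
      (-1) ^ k * (S k 0 * ∏ i ∈ Finset.range k, S i (i + 1)) := by
  rw [pencilDet_eq_X_mul, coeff_X_mul, ← constantCoeff_apply, RingHom.map_det,
    det_eq_corner_mul_prod_superdiag, ← Fin.prod_univ_eq_prod_range fun i => S i (i + 1)]
  · simp [pencil]
  · intro i j hij
    rw [RingHom.mapMatrix_apply, Matrix.map_apply, Matrix.updateRow_ne (Fin.castSucc_ne_last i),
      pencil_of_le S hij, constantCoeff_apply, coeff_X_mul_zero]

lemma pencil_reindex (p q : ℕ) (S : ℕ → ℕ → R) :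
    (pencil (p + q) S).submatrix finSumFinEquiv finSumFinEquiv =
      Matrix.fromBlocks (pencil p S)
        (Matrix.of fun i j => pencil (p + q) S (Fin.castAdd q i) (Fin.natAdd p j))
        (Matrix.of fun i j => pencil (p + q) S (Fin.natAdd p i) (Fin.castAdd q j))
        (pencil q fun i j => S (p + i) (p + j)) := by
  ext i j : 2
  rcases i with i | i <;> rcases j with j | j <;> simp [pencil, -Fin.val_fin_le]

lemma pencilDet_mul_of_upper {p q : ℕ} {S : ℕ → ℕ → R}
    (h : ∀ i < p, ∀ j < q, S i (p + j) = 0) :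
    pencilDet (p + q) S = pencilDet p S * pencilDet q fun i j => S (p + i) (p + j) := by
  have upper_block : (Matrix.of fun i j => pencil (p + q) S (Fin.castAdd q i)
      (Fin.natAdd p j)) = 0 :=
    Matrix.ext fun i j => pencil_eq_zero (h i i.2 j j.2)
  rw [pencilDet, ← Matrix.det_submatrix_equiv_self finSumFinEquiv, pencil_reindex, upper_block,
    Matrix.det_fromBlocks_zero₁₂, pencilDet, pencilDet]

lemma pencilDet_succ_of_row_last {S : ℕ → ℕ → R} (h : ∀ j < k, S k j = 0) :
    pencilDet (k + 1) S = X * C (S k k) * pencilDet k S := by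
  rw [pencilDet, det_eq_mul_det_castSucc_of_row_last fun j => pencil_eq_zero (h j j.2),
    pencil_last]
  rfl

lemma pencilDet_succ_of_row {i : ℕ} (hi : i < k) {S : ℕ → ℕ → R} (h : ∀ j < k, S i j = 0) :
    pencilDet (k + 1) S =
      -(C (S i k) * ((pencil k S).updateRow ⟨i, hi⟩ fun j => X * C (S k j)).det) := by
  rw [pencilDet, det_eq_neg_mul_of_row (i := ⟨i, hi⟩) fun j => pencil_eq_zero (h j j.2),
    pencil_of_lt S (show i < k from hi)]
  simp only [pencil_last]
  rfl

lemma pencilDet_succ_of_col {S : ℕ → ℕ → R} (h : ∀ i < k + 2, i ≠ k → S i (k + 1) = 0) :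
    pencilDet (k + 2) S =
      -(C (S k (k + 1)) * pencilDet (k + 1) (Function.update S k (S (k + 1)))) := by
  rw [pencilDet, det_eq_neg_mul_of_col (i := Fin.last k) fun l hl =>
      pencil_eq_zero (h l l.2 fun h => hl (Fin.ext h)),
    pencil_of_lt S (show k < k + 1 from k.lt_succ_self), pencilDet,
    pencil_update k.lt_succ_self]
  congr 5
  funext j
  rw [pencil_last, if_pos (Nat.le_of_lt_succ j.2), ← C_mul_X_eq_monomial, mul_comm]
  rfl

lemma coeff_two_pencilDet_of_split {p q : ℕ} {S : ℕ → ℕ → R}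
    (h : ∀ i < p + 1, ∀ j < q + 1, S i (p + 1 + j) = 0) :
    (pencilDet (p + 1 + (q + 1)) S).coeff 2 =
      (-1) ^ (p + q) * ((S p 0 * ∏ l ∈ Finset.range p, S l (l + 1)) *
        (S (p + 1 + q) (p + 1) *
          ∏ l ∈ Finset.range q, S (p + 1 + l) (p + 1 + (l + 1)))) := by
  rw [pencilDet_mul_of_upper h, coeff_mul, Finset.Nat.sum_antidiagonal_eq_sum_range_succ_mk]
  simp only [Finset.sum_range_succ, Finset.sum_range_zero, coeff_pencilDet_zero,
    Nat.sub_self, Nat.sub_zero, zero_mul, mul_zero, zero_add, add_zero,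
    show 2 - 1 = 1 from rfl, coeff_pencilDet_one]
  ring

lemma det_updateRow_pencil_X_mul {i : ℕ} (hi : i < k) (S : ℕ → ℕ → R) (z : ℕ → R) :
    ((pencil k S).updateRow ⟨i, hi⟩ fun j => X * C (z j)).det =
      pencilDet k (Function.update S i fun j => if j ≤ i then z j else 0) +
        X * pencilDet k (Function.update S i fun j => if j ≤ i then 0 else z j) := by
  rw [pencilDet, pencilDet, pencil_update hi, pencil_update hi, ← Matrix.det_updateRow_smul,
    ← Matrix.det_updateRow_add]
  congr 2
  funext j
  by_cases hj : (j : ℕ) ≤ i <;> simp [hj, ← C_mul_X_eq_monomial, mul_comm X]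

lemma coeff_two_pencilDet_update_single {n i : ℕ} (hi : i < n) {S : ℕ → ℕ → R}
    (hS : ∀ l < n, ∀ c, l + 1 < c → S l c = 0) {z : ℕ → R} (hz : z 0 = 0) (y : R) :
    (pencilDet (n + 2) (Function.update (Function.update S (n + 1) z) i
      (Pi.single (n + 1) y))).coeff 2 =
      -(y * ((-1) ^ n * (S n 0 * (z (i + 1) *
        ∏ l ∈ (Finset.range n).erase i, S l (l + 1))))) := by
  set T := Function.update (Function.update S (n + 1) z) i (Pi.single (n + 1) y) with hT
  have T_self : T i = Pi.single (n + 1) y := Function.update_self ..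
  have T_last : T (n + 1) = z := by
    rw [hT, Function.update_of_ne (by omega), Function.update_self]
  have T_of_ne {l : ℕ} (hl : l < n + 1) (hli : l ≠ i) : T l = S l := by
    rw [hT, Function.update_of_ne hli, Function.update_of_ne hl.ne]
  have lower : (pencilDet (n + 1) (Function.update T i fun j => if j ≤ i then z j else 0)).coeff 2
      = 0 := by
    obtain ⟨q, rfl⟩ : ∃ q, n = i + 1 + q := ⟨n - (i + 1), by omega⟩
    rw [add_assoc (i + 1) q 1, coeff_two_pencilDet_of_split]
    · simp [hz]
    · intro l hl j hj
      rcases eq_or_ne l i with rfl | hli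
      · simp [show ¬ l + 1 + j ≤ l by omega]
      · rw [Function.update_of_ne hli, T_of_ne (by omega) hli, hS l (by omega) _ (by omega)]
  rw [pencilDet_succ_of_row (by omega : i < n + 1) fun j hj => by
      rw [T_self, Pi.single_eq_of_ne hj.ne],
    T_self, T_last, Pi.single_eq_same, coeff_neg, coeff_C_mul, det_updateRow_pencil_X_mul,
    coeff_add, lower, zero_add, coeff_X_mul, coeff_pencilDet_one,
    ← Finset.mul_prod_erase _ _ (Finset.mem_range.mpr hi), Function.update_self,
    if_neg (by omega), Function.update_of_ne hi.ne', T_of_ne n.lt_succ_self hi.ne']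
  congr 5
  refine Finset.prod_congr rfl fun l hl => ?_
  obtain ⟨hli, hl⟩ := Finset.mem_erase.mp hl
  rw [Function.update_of_ne hli, T_of_ne (Nat.lt_succ_of_lt (Finset.mem_range.mp hl)) hli]

lemma pencilDet_update_last_of_hessenberg {S : ℕ → ℕ → R}
    (hS : ∀ l < k + 1, ∀ c, l + 1 < c → S l c = 0) (z : ℕ → R) :
    pencilDet (k + 2) (Function.update S (k + 1) (Function.update z (k + 1) 0)) =
      -(C (S k (k + 1)) * pencilDet (k + 1) (Function.update S k z)) := by
  rw [pencilDet_succ_of_col, Function.update_of_ne k.lt_succ_self.ne, Function.update_self]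
  · refine congrArg (fun P => -(C _ * P)) (pencilDet_congr fun i hi j hj => ?_)
    rcases eq_or_ne i k with rfl | hik
    · simp [Function.update_of_ne hj.ne]
    · rw [Function.update_of_ne hik, Function.update_of_ne hik, Function.update_of_ne hi.ne]
  · intro i hi hik
    rcases (Nat.le_of_lt_succ hi).eq_or_lt with rfl | hi
    · simp
    · rw [Function.update_of_ne hi.ne, hS i hi _ (by omega)]

/-- Expanding along the last column reduces the size by one. -/
lemma exists_row_pencilDet_eq {K : Type*} [Field K] {k : ℕ} {S : ℕ → ℕ → K}
    (hS : ∀ l < k, ∀ c, l + 1 < c → S l c = 0) (diag_ne : ∀ l < k, S l l ≠ 0)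
    (superdiag_ne : ∀ l < k, S l (l + 1) ≠ 0) {Q : K[X]} (hQ0 : Q.coeff 0 = 0)
    (hQ : Q.natDegree ≤ k + 1) :
    ∃ z : ℕ → K, pencilDet (k + 1) (Function.update S k z) = Q := by
  induction k generalizing Q with
  | zero =>
    refine ⟨fun _ => Q.coeff 1, ?_⟩
    rw [pencilDet_succ_of_row_last (by simp)]
    conv_rhs => rw [eq_X_add_C_of_natDegree_le_one hQ, hQ0]
    simp only [Function.update_self, pencilDet, Matrix.det_fin_zero, mul_one, C_0,
      add_zero, X_mul_C]
  | succ k ih =>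
    have diag_prod_ne : ∏ i ∈ Finset.range (k + 1), S i i ≠ 0 :=
      Finset.prod_ne_zero_iff.mpr fun i hi => diag_ne i (Finset.mem_range.mp hi)
    set d := Q.coeff (k + 2) / ∏ i ∈ Finset.range (k + 1), S i i with hd
    set V := pencilDet (k + 2) (Function.update S (k + 1) (Pi.single (k + 1) d)) with hV
    have coeff_V : V.coeff (k + 2) = Q.coeff (k + 2) := by
      rw [hV, coeff_pencilDet_card, Finset.prod_range_succ, Finset.prod_congr rfl fun i hi => by
        rw [Function.update_of_ne (Finset.mem_range.mp hi).ne]]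
      simp [hd, mul_div_cancel₀ _ diag_prod_ne]
    have natDegree_sub : (Q - V).natDegree ≤ k + 1 := by
      refine natDegree_le_iff_coeff_eq_zero.mpr fun n hn => ?_
      rcases (show k + 2 ≤ n from hn).eq_or_lt with rfl | hn
      · rw [coeff_sub, coeff_V, sub_self]
      · rw [coeff_sub, hV, coeff_pencilDet_eq_zero hn,
          coeff_eq_zero_of_natDegree_lt (hQ.trans_lt hn), sub_zero]
    obtain ⟨z, hz⟩ := ih (fun l hl => hS l (by omega)) (fun l hl => diag_ne l (by omega))
      (fun l hl => superdiag_ne l (by omega)) (Q := C (-(S k (k + 1))⁻¹) * (Q - V))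
      (by simp [hQ0, hV, coeff_pencilDet_zero]) ((natDegree_C_mul_le _ _).trans natDegree_sub)
    refine ⟨Function.update z (k + 1) 0 + Pi.single (k + 1) d, ?_⟩
    rw [pencilDet_update_add (k + 1).lt_succ_self, ← hV, pencilDet_update_last_of_hessenberg hS, hz,
      ← mul_assoc, ← C_mul]
    simp [superdiag_ne k k.lt_succ_self]

lemma exists_row_apply_last_eq_zero_pencilDet_eq {K : Type*} [Field K] {k : ℕ} {S : ℕ → ℕ → K}
    (hS : ∀ l < k, ∀ c, l + 1 < c → S l c = 0) (diag_ne : ∀ l < k, S l l ≠ 0)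
    (superdiag_ne : ∀ l < k, S l (l + 1) ≠ 0) {Q : K[X]} (hQ0 : Q.coeff 0 = 0)
    (hQ : ∀ n, k + 1 ≤ n → Q.coeff n = 0) :
    ∃ z : ℕ → K, z k = 0 ∧ pencilDet (k + 1) (Function.update S k z) = Q := by
  obtain ⟨z, hz⟩ := exists_row_pencilDet_eq hS diag_ne superdiag_ne hQ0
    (natDegree_le_iff_coeff_eq_zero.mpr fun n hn => hQ n hn.le)
  refine ⟨z, ?_, hz⟩
  have leading_eq := coeff_pencilDet_card (k + 1) (Function.update S k z)
  rw [hz, hQ _ le_rfl, Finset.prod_range_succ, Function.update_self] at leading_eq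
  refine (mul_eq_zero.mp leading_eq.symm).resolve_left (Finset.prod_ne_zero_iff.mpr fun i hi => ?_)
  have hi := Finset.mem_range.mp hi
  rw [Function.update_of_ne hi.ne]
  exact diag_ne i hi

end PencilDet

section Perturbation

variable {K V W : Type*} [Field K] [Infinite K] [AddCommGroup V] [Module K V] [AddCommGroup W]
  [Module K W] {W₀ : Submodule K W} {T : Submodule K V} [FiniteDimensional K T] {L M : W →ₗ[K] V}

lemma exists_le_map_add_smul (hL : T ≤ W₀.map L) (hM : W₀.map M ≤ T) :
    ∃ a : K, a ≠ 0 ∧ T ≤ W₀.map (L + a • M) := by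
  obtain ⟨g, hg⟩ := Module.projective_lifting_property (L.submoduleMap W₀)
    (Submodule.inclusion hL) (L.submoduleMap_surjective W₀)
  have L_apply_g (t : T) : L (g t) = t := congrArg Subtype.val (LinearMap.congr_fun hg t)
  let N : Module.End K T := (M.restrict fun w hw => hM (Submodule.mem_map_of_mem hw)) ∘ₗ g
  obtain ⟨ν, hν⟩ :=
    ((Module.End.finite_hasEigenvalue N).union (Set.finite_singleton 0)).exists_notMem
  obtain ⟨hνN, hν0 : ν ≠ 0⟩ := not_or.mp hν
  have N_sub_surjective : Function.Surjective (N - ν • (1 : Module.End K T)) := by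
    rw [← LinearMap.injective_iff_surjective, ← LinearMap.ker_eq_bot, ← Module.End.eigenspace_def]
    exact not_not.mp hνN
  refine ⟨-ν⁻¹, neg_ne_zero.mpr (inv_ne_zero hν0), fun t ht => ?_⟩
  obtain ⟨s, hs⟩ := N_sub_surjective (-ν • ⟨t, ht⟩)
  have M_apply_g : M (g s) = ν • (s : V) - ν • t := by
    rw [sub_eq_add_neg, ← neg_smul, ← sub_eq_iff_eq_add']
    exact congrArg Subtype.val hs
  refine ⟨g s, (g s).2, ?_⟩
  rw [LinearMap.add_apply, LinearMap.smul_apply, L_apply_g, M_apply_g]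
  simp [smul_sub, smul_smul, hν0]

/-- If `L` kills the range of `π`, then rescaling that range by `a⁻¹` turns `L + a • (M - L)` into
`L + M ∘ π + O(a)`: surjectivity of the limit as `a → 0` gives surjectivity for some `a ≠ 0`. -/
lemma exists_le_map_add_smul_sub {π : W →ₗ[K] W} (hπ : ∀ x ∈ W₀, π x ∈ W₀)
    (hLπ : ∀ x ∈ W₀, L (π x) = 0) (hL : W₀.map L ≤ T) (hM : W₀.map M ≤ T)
    (h : T ≤ W₀.map (L + M ∘ₗ π)) : ∃ a : K, a ≠ 0 ∧ T ≤ W₀.map (L + a • (M - L)) := by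
  have correction : W₀.map ((M - L) ∘ₗ (LinearMap.id - π)) ≤ T := by
    rintro _ ⟨x, hx, rfl⟩
    have hx' : x - π x ∈ W₀ := sub_mem hx (hπ x hx)
    exact sub_mem (hM (Submodule.mem_map_of_mem hx')) (hL (Submodule.mem_map_of_mem hx'))
  obtain ⟨a, ha, hT⟩ := exists_le_map_add_smul h correction
  refine ⟨a, ha, hT.trans ?_⟩
  rintro _ ⟨x, hx, rfl⟩
  refine ⟨x - π x + a⁻¹ • π x,
    add_mem (sub_mem hx (hπ x hx)) (W₀.smul_mem _ (hπ x hx)), ?_⟩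
  simp only [LinearMap.add_apply, LinearMap.smul_apply, LinearMap.sub_apply, map_add, map_sub,
    map_smul, LinearMap.comp_apply, LinearMap.id_apply, hLπ x hx, smul_sub, smul_smul,
    inv_mul_cancel₀ ha, one_smul, smul_zero, sub_zero, smul_add]
  abel

end Perturbation

section PencilDeriv

open Polynomial

variable {A : Type*} [CommRing A] {k : ℕ}

/-- The derivative at `S` of the map `S ↦ pencilDet k S`, as a `𝕜`-linear map. -/
noncomputable def pencilDeriv (𝕜 : Type*) [CommRing 𝕜] [Algebra 𝕜 A] (k : ℕ) (S : ℕ → ℕ → A) :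
    (ℕ → ℕ → A) →ₗ[𝕜] A[X] where
  toFun E := ∑ i ∈ Finset.range k, pencilDet k (Function.update S i (E i))
  map_add' E E' := by
    rw [← Finset.sum_add_distrib]
    exact Finset.sum_congr rfl fun i hi => pencilDet_update_add (Finset.mem_range.mp hi) _ _ _
  map_smul' c E := by
    rw [Finset.smul_sum]
    refine Finset.sum_congr rfl fun i hi => ?_
    rw [Pi.smul_apply, ← algebraMap_smul A c (E i),
      pencilDet_update_smul (Finset.mem_range.mp hi), algebraMap_smul, RingHom.id_apply]

variable {𝕜 : Type*} [CommRing 𝕜] [Algebra 𝕜 A]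

lemma pencilDeriv_apply (k : ℕ) (S E : ℕ → ℕ → A) :
    pencilDeriv 𝕜 k S E = ∑ i ∈ Finset.range k, pencilDet k (Function.update S i (E i)) := rfl

lemma coeff_pencilDeriv (k n : ℕ) (S E : ℕ → ℕ → A) :
    (pencilDeriv 𝕜 k S E).coeff n =
      ∑ i ∈ Finset.range k, (pencilDet k (Function.update S i (E i))).coeff n := by
  rw [pencilDeriv_apply, finsetSum_coeff]

lemma pencilDeriv_congr {S S' : ℕ → ℕ → A} (h : ∀ i < k, ∀ j < k, S i j = S' i j) :
    pencilDeriv 𝕜 k S = pencilDeriv 𝕜 k S' := by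
  refine LinearMap.ext fun E => ?_
  rw [pencilDeriv_apply, pencilDeriv_apply]
  refine Finset.sum_congr rfl fun l _ => pencilDet_congr fun i hi j hj => ?_
  rcases eq_or_ne i l with rfl | hil
  · rw [Function.update_self, Function.update_self]
  · rw [Function.update_of_ne hil, Function.update_of_ne hil, h i hi j hj]

lemma pencilDeriv_apply_congr (S : ℕ → ℕ → A) {E E' : ℕ → ℕ → A}
    (h : ∀ i < k, ∀ j < k, E i j = E' i j) : pencilDeriv 𝕜 k S E = pencilDeriv 𝕜 k S E' := by
  rw [pencilDeriv_apply, pencilDeriv_apply]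
  refine Finset.sum_congr rfl fun l _ => pencilDet_congr fun i hi j hj => ?_
  rcases eq_or_ne i l with rfl | hil
  · simp [h i hi j hj]
  · rw [Function.update_of_ne hil, Function.update_of_ne hil]

lemma pencilDeriv_update_add_smul {i : ℕ} (hi : i < k) (S : ℕ → ℕ → A) (u v : ℕ → A) (c : 𝕜) :
    pencilDeriv 𝕜 k (Function.update S i (u + c • v)) =
      pencilDeriv 𝕜 k (Function.update S i u) +
        c • (pencilDeriv 𝕜 k (Function.update S i (u + v)) -
          pencilDeriv 𝕜 k (Function.update S i u)) := by
  refine LinearMap.ext fun E => ?_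
  simp only [LinearMap.add_apply, LinearMap.smul_apply, LinearMap.sub_apply, pencilDeriv_apply]
  rw [← Finset.sum_sub_distrib, Finset.smul_sum, ← Finset.sum_add_distrib]
  refine Finset.sum_congr rfl fun l _ => ?_
  rcases eq_or_ne l i with rfl | hli
  · simp
  · simp only [Function.update_comm hli.symm]
    rw [pencilDet_update_add hi, pencilDet_update_add hi, ← algebraMap_smul A c v,
      pencilDet_update_smul hi, add_sub_cancel_left, algebraMap_smul]

lemma pencilDeriv_of_row_last {S E : ℕ → ℕ → A} (hS : ∀ j < k, S k j = 0) :
    pencilDeriv 𝕜 (k + 1) S E =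
      X * C (S k k) * pencilDeriv 𝕜 k S E + pencilDet (k + 1) (Function.update S k (E k)) := by
  rw [pencilDeriv_apply, Finset.sum_range_succ, pencilDeriv_apply, Finset.mul_sum]
  congr 1
  refine Finset.sum_congr rfl fun i hi => ?_
  have hik : k ≠ i := (Finset.mem_range.mp hi).ne'
  rw [pencilDet_succ_of_row_last (by simpa [Function.update_of_ne hik] using hS),
    Function.update_of_ne hik]

lemma pencilDeriv_update_last_single (S E : ℕ → ℕ → A) (y : A) :
    pencilDeriv 𝕜 (k + 1) (Function.update S k (Pi.single k y)) E =
      X * C y * pencilDeriv 𝕜 k S E + pencilDet (k + 1) (Function.update S k (E k)) := by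
  rw [pencilDeriv_of_row_last, Function.update_self, Pi.single_eq_same, Function.update_idem,
    pencilDeriv_congr (S' := S)]
  · intro i hi j _
    rw [Function.update_of_ne hi.ne]
  · intro j hj
    rw [Function.update_self, Pi.single_eq_of_ne hj.ne]

lemma coeff_one_pencilDeriv (S : ℕ → ℕ → A) {E : ℕ → ℕ → A} (hE : ∀ i < k, E i (i + 1) = 0) :
    (pencilDeriv 𝕜 (k + 1) S E).coeff 1 =
      (-1) ^ k * (E k 0 * ∏ i ∈ Finset.range k, S i (i + 1)) := by
  rw [coeff_pencilDeriv, Finset.sum_range_succ, Finset.sum_eq_zero, zero_add, coeff_pencilDet_one,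
    Function.update_self]
  · congr 2
    exact Finset.prod_congr rfl fun i hi => by
      rw [Function.update_of_ne (Finset.mem_range.mp hi).ne]
  · intro i hi
    rw [coeff_pencilDet_one, Finset.prod_eq_zero hi, mul_zero, mul_zero]
    rw [Function.update_self, hE i (Finset.mem_range.mp hi)]

lemma coeff_card_pencilDeriv (S : ℕ → ℕ → A) {E : ℕ → ℕ → A} (hE : ∀ i < k, E i i = 0) :
    (pencilDeriv 𝕜 k S E).coeff k = 0 := by
  rw [coeff_pencilDeriv]
  refine Finset.sum_eq_zero fun i hi => ?_
  rw [coeff_pencilDet_card, Finset.prod_eq_zero hi]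
  rw [Function.update_self, hE i (Finset.mem_range.mp hi)]

end PencilDeriv

section DegreeBounds

open Polynomial

variable {R : Type*} [CommRing R]

/-- The polynomials of degree at most `d`, where `d` is an integer: for `d < 0` only `0`. -/
def intDegreeLE (R : Type*) [CommRing R] (d : ℤ) : Submodule R R[X] where
  carrier := {P | ∀ n : ℕ, d < n → P.coeff n = 0}
  add_mem' hP hQ n hn := by rw [coeff_add, hP n hn, hQ n hn, add_zero]
  zero_mem' n _ := coeff_zero n
  smul_mem' c P hP n hn := by rw [coeff_smul, hP n hn, smul_zero]

lemma natCast_le_of_mem_intDegreeLE {d : ℤ} {P : R[X]} (hP : P ∈ intDegreeLE R d) {n : ℕ}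
    (hn : P.coeff n ≠ 0) : (n : ℤ) ≤ d :=
  not_lt.mp (mt (hP n) hn)

lemma mem_intDegreeLE_of_natDegree_le {d : ℤ} {P : R[X]} (h : (P.natDegree : ℤ) ≤ d) :
    P ∈ intDegreeLE R d := fun n hn =>
  coeff_eq_zero_of_natDegree_lt (by omega)

lemma intDegreeLE_mono {d d' : ℤ} (h : d ≤ max d' (-1)) : intDegreeLE R d ≤ intDegreeLE R d' :=
  fun _ hP n hn => hP n (by omega)

lemma C_mem_intDegreeLE {d : ℤ} (hd : 0 ≤ d) (r : R) : C r ∈ intDegreeLE R d :=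
  mem_intDegreeLE_of_natDegree_le (by rwa [natDegree_C, Nat.cast_zero])

lemma mul_mem_intDegreeLE {d d' : ℤ} {P Q : R[X]} (hP : P ∈ intDegreeLE R d)
    (hQ : Q ∈ intDegreeLE R d') : P * Q ∈ intDegreeLE R (d + d') := by
  intro n hn
  rw [coeff_mul]
  refine Finset.sum_eq_zero fun ij hij => ?_
  have hij : ij.1 + ij.2 = n := Finset.HasAntidiagonal.mem_antidiagonal.mp hij
  rcases lt_or_ge d ij.1 with h | h
  · rw [hP _ h, zero_mul]
  · rw [hQ _ (by omega), mul_zero]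

lemma mem_intDegreeLE_of_monic_mul {b Q : R[X]} (hb : b.Monic) {d : ℤ}
    (h : b * Q ∈ intDegreeLE R (d + b.natDegree)) : Q ∈ intDegreeLE R d := by
  rcases eq_or_ne Q 0 with rfl | hQ
  · exact zero_mem _
  have hbQ : (b * Q).coeff (b * Q).natDegree ≠ 0 :=
    leadingCoeff_ne_zero.mpr fun h0 => hQ (hb.mul_right_eq_zero_iff.mp h0)
  have hdeg := hb.natDegree_mul' hQ
  have := natCast_le_of_mem_intDegreeLE h hbQ
  exact mem_intDegreeLE_of_natDegree_le (by omega)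

/-- The polynomials `∑ P_j x ^ j` with `deg P_j + j * m ≤ w` for all `j`, that is, of weighted
degree at most `w` when `t` has weight `1` and `x` has weight `m`. -/
def weightLE (R : Type*) [CommRing R] (m : ℕ) (w : ℤ) : Submodule R R[X][X] where
  carrier := {P | ∀ j : ℕ, P.coeff j ∈ intDegreeLE R (w - j * m)}
  add_mem' hP hQ j := by
    rw [coeff_add]
    exact add_mem (hP j) (hQ j)
  zero_mem' j := by
    rw [coeff_zero]
    exact zero_mem _
  smul_mem' c P hP j := by
    rw [coeff_smul]
    exact Submodule.smul_mem _ c (hP j)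

variable {m : ℕ}

lemma one_mem_weightLE : (1 : R[X][X]) ∈ weightLE R m 0 := by
  intro j
  rw [coeff_one]
  split_ifs with hj
  · rw [hj]
    exact C_mem_intDegreeLE (by simp) 1
  · exact zero_mem _

lemma monomial_mem_weightLE {w : ℤ} {n : ℕ} {P : R[X]} (hP : P ∈ intDegreeLE R (w - n * m)) :
    monomial n P ∈ weightLE R m w := by
  intro j
  rw [coeff_monomial]
  split_ifs with hj
  · rwa [← hj]
  · exact zero_mem _

lemma mul_mem_weightLE {w w' : ℤ} {P Q : R[X][X]} (hP : P ∈ weightLE R m w)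
    (hQ : Q ∈ weightLE R m w') : P * Q ∈ weightLE R m (w + w') := by
  intro j
  rw [coeff_mul]
  refine sum_mem fun ij hij => ?_
  convert mul_mem_intDegreeLE (hP ij.1) (hQ ij.2) using 1
  rw [← Finset.HasAntidiagonal.mem_antidiagonal.mp hij]
  push_cast
  ring_nf

lemma prod_mem_weightLE {ι : Type*} (s : Finset ι) {w : ι → ℤ} {P : ι → R[X][X]}
    (h : ∀ i ∈ s, P i ∈ weightLE R m (w i)) : ∏ i ∈ s, P i ∈ weightLE R m (∑ i ∈ s, w i) := by
  induction s using Finset.cons_induction with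
  | empty => exact one_mem_weightLE
  | cons a s ha ih =>
    rw [Finset.sum_cons, Finset.prod_cons]
    exact mul_mem_weightLE (h a (Finset.mem_cons_self a s))
      (ih fun i hi => h i (Finset.mem_cons_of_mem hi))

lemma det_mem_weightLE {n : Type*} [Fintype n] [DecidableEq n] {M : Matrix n n R[X][X]}
    {a b : n → ℤ} (hM : ∀ i j, M i j ∈ weightLE R m (a i - b j)) :
    M.det ∈ weightLE R m (∑ i, (a i - b i)) := by
  rw [Matrix.det_apply]
  refine sum_mem fun σ _ => ?_
  have hσ := prod_mem_weightLE Finset.univ fun i _ => hM (σ i) i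
  rw [Finset.sum_sub_distrib, Equiv.sum_comp σ a, ← Finset.sum_sub_distrib] at hσ
  rcases Int.units_eq_one_or (Equiv.Perm.sign σ) with hs | hs
  · rwa [hs, one_smul]
  · rw [hs, Units.neg_smul, one_smul]
    exact neg_mem hσ

end DegreeBounds

section PencilSpaces

open Polynomial

variable {R : Type*} [CommRing R] {k m : ℕ} {e f : ℕ → ℤ}

/-- The bound on the degree of the entry `(i, j)` of an array. As the columns are numbered backwards
compared with the matrices `A` and `B`, the entries of `A` are those with `j ≤ i`. -/
def entryBound (m : ℕ) (e f : ℕ → ℤ) (i j : ℕ) : ℤ := f i - e j + if j ≤ i then 0 else m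

lemma entryBound_of_le {i j : ℕ} (h : j ≤ i) : entryBound m e f i j = f i - e j := by
  rw [entryBound, if_pos h, Nat.cast_zero, add_zero]

lemma entryBound_of_lt {i j : ℕ} (h : i < j) : entryBound m e f i j = f i - e j + m := by
  rw [entryBound, if_neg h.not_ge]

/-- The possible `i`-th rows of an array that satisfies the degree bounds. -/
noncomputable def rowLE (R : Type*) [CommRing R] (m : ℕ) (e f : ℕ → ℤ) (i : ℕ) :
    Submodule R (ℕ → R[X]) :=
  Submodule.pi Set.univ fun j => intDegreeLE R (entryBound m e f i j)

lemma mem_rowLE {i : ℕ} {z : ℕ → R[X]} :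
    z ∈ rowLE R m e f i ↔ ∀ j, z j ∈ intDegreeLE R (entryBound m e f i j) := by
  simp only [rowLE, Submodule.mem_pi, Set.mem_univ, forall_true_left]

lemma single_mem_rowLE {i j : ℕ} {P : R[X]} (hP : P ∈ intDegreeLE R (entryBound m e f i j)) :
    Pi.single j P ∈ rowLE R m e f i :=
  (Submodule.le_comap_single_pi _) hP

/-- The arrays that satisfy the degree bounds. -/
noncomputable def entriesLE (R : Type*) [CommRing R] (m : ℕ) (e f : ℕ → ℤ) :
    Submodule R (ℕ → ℕ → R[X]) :=
  Submodule.pi Set.univ (rowLE R m e f)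

lemma mem_entriesLE {S : ℕ → ℕ → R[X]} : S ∈ entriesLE R m e f ↔ ∀ i, S i ∈ rowLE R m e f i := by
  simp only [entriesLE, Submodule.mem_pi, Set.mem_univ, forall_true_left]

lemma update_mem_entriesLE {S : ℕ → ℕ → R[X]} {i : ℕ} {z : ℕ → R[X]} (hS : S ∈ entriesLE R m e f)
    (hz : z ∈ rowLE R m e f i) : Function.update S i z ∈ entriesLE R m e f :=
  Set.update_mem_pi_iff_of_mem hS |>.mpr fun _ => hz

lemma pencilDet_mem_weightLE {S : ℕ → ℕ → R[X]} (hS : S ∈ entriesLE R m e f) (k : ℕ) :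
    pencilDet k S ∈ weightLE R m (∑ i ∈ Finset.range k, (f i - e i) + k * m) := by
  have h : pencilDet k S ∈ weightLE R m (∑ i : Fin k, (f i + m - e i)) := by
    refine det_mem_weightLE fun i j => monomial_mem_weightLE ?_
    convert mem_rowLE.mp (mem_entriesLE.mp hS i) j using 2
    rw [entryBound]
    split_ifs <;> push_cast <;> ring
  convert h using 2
  rw [Fin.sum_univ_eq_sum_range fun i => f i + m - e i, ← Finset.card_range k, ← nsmul_eq_mul,
    ← Finset.sum_const, Finset.card_range, ← Finset.sum_add_distrib]
  exact Finset.sum_congr rfl fun i _ => by ring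

/-- The restricted tangent directions in size `k`, extended by zero beyond the leading `k × k`
block. -/
def tangents (R : Type*) [CommRing R] (k m : ℕ) (e f : ℕ → ℤ) :
    Submodule R (ℕ → ℕ → R[X]) where
  carrier := {E | E ∈ entriesLE R m e f ∧ (∀ i, E i i = 0) ∧ (∀ i, E i (i + 1) = 0) ∧
    ∀ i j, k ≤ i ∨ k ≤ j → E i j = 0}
  add_mem' := by
    rintro E E' ⟨hE, diag, superdiag, outside⟩ ⟨hE', diag', superdiag', outside'⟩
    refine ⟨add_mem hE hE', fun i => ?_, fun i => ?_, fun i j hij => ?_⟩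
    · rw [Pi.add_apply, Pi.add_apply, diag, diag', add_zero]
    · rw [Pi.add_apply, Pi.add_apply, superdiag, superdiag', add_zero]
    · rw [Pi.add_apply, Pi.add_apply, outside i j hij, outside' i j hij, add_zero]
  zero_mem' := ⟨zero_mem _, fun _ => rfl, fun _ => rfl, fun _ _ _ => rfl⟩
  smul_mem' := by
    rintro c E ⟨hE, diag, superdiag, outside⟩
    refine ⟨Submodule.smul_mem _ c hE, fun i => ?_, fun i => ?_, fun i j hij => ?_⟩
    · rw [Pi.smul_apply, Pi.smul_apply, diag, smul_zero]
    · rw [Pi.smul_apply, Pi.smul_apply, superdiag, smul_zero]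
    · rw [Pi.smul_apply, Pi.smul_apply, outside i j hij, smul_zero]

lemma tangents_mono {l : ℕ} (h : k ≤ l) : tangents R k m e f ≤ tangents R l m e f :=
  fun _ ⟨hE, diag, superdiag, outside⟩ =>
    ⟨hE, diag, superdiag, fun i j hij => outside i j (hij.imp h.trans h.trans)⟩

/-- The polynomials `∑ P_j x ^ j` with `P_j = 0` unless `0 < j < k`, with `b ∣ P_1`, and with
`deg P_j ≤ δ + (k - j) * m` for all `j`. -/
def targets (k m : ℕ) (δ : ℤ) (b : R[X]) : Submodule R R[X][X] where
  carrier := {P | P.coeff 0 = 0 ∧ (∀ j, k ≤ j → P.coeff j = 0) ∧ P ∈ weightLE R m (δ + k * m) ∧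
    b ∣ P.coeff 1}
  add_mem' := by
    rintro P P' ⟨hP0, hPk, hPw, hPb⟩ ⟨hP0', hPk', hPw', hPb'⟩
    refine ⟨?_, fun j hj => ?_, add_mem hPw hPw', ?_⟩
    · rw [coeff_add, hP0, hP0', add_zero]
    · rw [coeff_add, hPk j hj, hPk' j hj, add_zero]
    · rw [coeff_add]
      exact dvd_add hPb hPb'
  zero_mem' := ⟨coeff_zero 0, fun j _ => coeff_zero j, zero_mem _, by
    rw [coeff_zero]
    exact dvd_zero b⟩
  smul_mem' := by
    rintro c P ⟨hP0, hPk, hPw, hPb⟩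
    refine ⟨?_, fun j hj => ?_, Submodule.smul_mem _ c hPw, ?_⟩
    · rw [coeff_smul, hP0, smul_zero]
    · rw [coeff_smul, hPk j hj, smul_zero]
    · rw [coeff_smul]
      exact dvd_smul_of_dvd c hPb

instance {F : Type*} [Field F] (k m : ℕ) (δ : ℤ) (b : F[X]) :
    FiniteDimensional F (targets k m δ b) := by
  let coeffs : targets k m δ b →ₗ[F] Fin k → Fin ((δ + k * m).toNat + 1) → F :=
    { toFun := fun P j n => (P.1.coeff j).coeff n
      map_add' := fun P Q => by ext; simp
      map_smul' := fun c P => by ext; simp }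
  suffices h : Function.Injective coeffs from Module.Finite.of_injective coeffs h
  rintro ⟨P, hP⟩ ⟨Q, hQ⟩ h
  refine Subtype.ext (Polynomial.ext fun j => Polynomial.ext fun n => ?_)
  rcases lt_or_ge j k with hj | hj
  · rcases lt_or_ge n ((δ + k * m).toNat + 1) with hn | hn
    · exact congrFun (congrFun h ⟨j, hj⟩) ⟨n, hn⟩
    · have hn : δ + k * m - j * m < n := by
        have : (0 : ℤ) ≤ j * m := by positivity
        omega
      rw [hP.2.2.1 j n hn, hQ.2.2.1 j n hn]
  · rw [hP.2.1 j hj, hQ.2.1 j hj]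

lemma targets_one (m : ℕ) (δ : ℤ) (b : R[X]) : targets 1 m δ b = ⊥ := by
  refine (Submodule.eq_bot_iff _).mpr fun P hP => Polynomial.ext fun j => ?_
  rcases j.eq_zero_or_pos with rfl | hj
  · exact hP.1
  · exact hP.2.1 j hj

lemma map_pencilDeriv_le_targets {S : ℕ → ℕ → R[X]} (hS : S ∈ entriesLE R m e f) :
    (tangents R (k + 1) m e f).map (pencilDeriv R (k + 1) S) ≤
      targets (k + 1) m (∑ i ∈ Finset.range (k + 1), (f i - e i))
        (∏ i ∈ Finset.range k, S i (i + 1)) := by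
  rintro _ ⟨E, ⟨hE, diag, superdiag, -⟩, rfl⟩
  refine ⟨?_, fun j hj => ?_, ?_, ?_⟩
  · rw [coeff_pencilDeriv]
    exact Finset.sum_eq_zero fun i _ => coeff_pencilDet_zero _ _
  · rcases hj.eq_or_lt with rfl | hj
    · exact coeff_card_pencilDeriv S fun i _ => diag i
    · rw [coeff_pencilDeriv]
      exact Finset.sum_eq_zero fun i _ => coeff_pencilDet_eq_zero hj _
  · rw [pencilDeriv_apply]
    exact sum_mem fun i _ =>
      pencilDet_mem_weightLE (update_mem_entriesLE hS (mem_entriesLE.mp hE i)) _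
  · rw [coeff_one_pencilDeriv S fun i _ => superdiag i]
    exact ((dvd_refl _).mul_left _).mul_left _

lemma map_pencilDeriv_update_le_targets {S : ℕ → ℕ → R[X]} (hS : S ∈ entriesLE R m e f)
    {z : ℕ → R[X]} (hz : z ∈ rowLE R m e f k) :
    (tangents R (k + 1) m e f).map (pencilDeriv R (k + 1) (Function.update S k z)) ≤
      targets (k + 1) m (∑ i ∈ Finset.range (k + 1), (f i - e i))
        (∏ i ∈ Finset.range k, S i (i + 1)) := by
  have prod_eq : ∏ i ∈ Finset.range k, S i (i + 1) =
      ∏ i ∈ Finset.range k, Function.update S k z i (i + 1) :=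
    Finset.prod_congr rfl fun i hi => by rw [Function.update_of_ne (Finset.mem_range.mp hi).ne]
  rw [prod_eq]
  exact map_pencilDeriv_le_targets (update_mem_entriesLE hS hz)

/-- The projection of an array to its `k`-th column. -/
noncomputable def colProj (R : Type*) [CommRing R] (k : ℕ) :
    (ℕ → ℕ → R[X]) →ₗ[R] (ℕ → ℕ → R[X]) :=
  (LinearMap.single R (fun _ => R[X]) k ∘ₗ LinearMap.proj k).compLeft ℕ

lemma colProj_apply (k : ℕ) (E : ℕ → ℕ → R[X]) (i : ℕ) :
    colProj R k E i = Pi.single k (E i k) := rfl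

lemma colProj_mem_tangents {l : ℕ} {E : ℕ → ℕ → R[X]} (hE : E ∈ tangents R k m e f) :
    colProj R l E ∈ tangents R k m e f := by
  obtain ⟨hE, diag, superdiag, outside⟩ := hE
  have apply_eq_zero {i j : ℕ} (h : E i j = 0) : colProj R l E i j = 0 := by
    rw [colProj_apply]
    rcases eq_or_ne j l with rfl | hj
    · rw [Pi.single_eq_same, h]
    · rw [Pi.single_eq_of_ne hj]
  exact ⟨mem_entriesLE.mpr fun i => single_mem_rowLE (mem_rowLE.mp (mem_entriesLE.mp hE i) l),
    fun i => apply_eq_zero (diag i), fun i => apply_eq_zero (superdiag i),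
    fun i j hij => apply_eq_zero (outside i j hij)⟩

lemma pencilDeriv_colProj_of_row_last {S E : ℕ → ℕ → R[X]} (hS : ∀ j < k, S k j = 0)
    (hE : E k k = 0) : pencilDeriv R (k + 1) S (colProj R k E) = 0 := by
  rw [pencilDeriv_of_row_last hS, pencilDeriv_apply_congr (E' := 0), map_zero, mul_zero, zero_add,
    pencilDet_eq_zero_of_row k.lt_succ_self]
  · intro j _
    rw [Function.update_self, colProj_apply, hE, Pi.single_zero, Pi.zero_apply]
  · intro i _ j hj
    rw [colProj_apply, Pi.single_eq_of_ne hj.ne, Pi.zero_apply, Pi.zero_apply]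

end PencilSpaces

section RootsPoly

open Polynomial

variable {F : Type*} [Field F]

/-- The monic polynomial with simple roots at the points of `s`. -/
noncomputable abbrev rootsPoly (s : Finset F) : F[X] := Lagrange.nodal s id

lemma eval_rootsPoly_eq_zero_iff {s : Finset F} {r : F} : eval r (rootsPoly s) = 0 ↔ r ∈ s := by
  rw [Lagrange.eval_nodal, Finset.prod_eq_zero_iff]
  simp only [id, sub_eq_zero, exists_eq_right']

lemma rootsPoly_dvd {s : Finset F} {P : F[X]} (h : ∀ r ∈ s, eval r P = 0) : rootsPoly s ∣ P :=
  Finset.prod_dvd_of_coprime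
    (fun _ _ _ _ hne => pairwise_coprime_X_sub_C Function.injective_id hne)
    fun r hr => dvd_iff_isRoot.mpr (h r hr)

lemma prod_rootsPoly_dvd {ι : Type*} {I : Finset ι} {R : ι → Finset F}
    (hR : (I : Set ι).PairwiseDisjoint R) {P : F[X]} (h : ∀ i ∈ I, ∀ r ∈ R i, eval r P = 0) :
    ∏ i ∈ I, rootsPoly (R i) ∣ P := by
  classical
  have hprod : ∏ i ∈ I, rootsPoly (R i) = rootsPoly (I.biUnion R) := (Finset.prod_biUnion hR).symm
  rw [hprod]
  refine rootsPoly_dvd fun r hr => ?_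
  obtain ⟨i, hi, hri⟩ := Finset.mem_biUnion.mp hr
  exact h i hi r hri

lemma rootsPoly_mem_intDegreeLE (s : Finset F) {d : ℤ} (h : (s.card : ℤ) ≤ d) :
    rootsPoly s ∈ intDegreeLE F d :=
  mem_intDegreeLE_of_natDegree_le (by rwa [Lagrange.natDegree_nodal])

lemma exists_mem_intDegreeLE_eval_eq {s : Finset F} {d : ℤ} (hs : s.card ≤ (d + 1).toNat)
    (y : F → F) : ∃ P ∈ intDegreeLE F d, ∀ r ∈ s, eval r P = y r := by
  classical
  refine ⟨Lagrange.interpolate s id y, fun n hn => coeff_eq_zero_of_degree_lt ?_, fun r hr =>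
    Lagrange.eval_interpolate_at_node y (Set.injOn_id _) hr⟩
  exact (Lagrange.degree_interpolate_lt y (Set.injOn_id _)).trans_le
    (Nat.cast_le.mpr (by omega))

lemma exists_interpolating_pair {s R R' : Finset F} (hs : Disjoint s R) (hR' : R' ⊆ R) {a b : ℤ}
    (ha : s.card + R'.card ≤ (a + 1).toNat) (hb : R.card - R'.card ≤ (b + 1).toNat) {c d : F → F}
    (hc : ∀ r ∈ R, c r ≠ 0) (hd : ∀ r ∈ R, d r ≠ 0) (x y : F → F) :
    ∃ P ∈ intDegreeLE F a, ∃ Q ∈ intDegreeLE F b, (∀ r ∈ s, eval r P = x r) ∧ ∀ r ∈ R,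
      c r * eval r P + d r * eval r (rootsPoly s) * eval r (rootsPoly R') * eval r Q = y r := by
  classical
  obtain ⟨P, hP, hPx⟩ := exists_mem_intDegreeLE_eval_eq
    ((Finset.card_union_le s R').trans ha) fun r => if r ∈ s then x r else y r / c r
  obtain ⟨Q, hQ, hQy⟩ := exists_mem_intDegreeLE_eval_eq (s := R \ R')
    (by rwa [Finset.card_sdiff_of_subset hR']) fun r =>
      (y r - c r * eval r P) / (d r * eval r (rootsPoly s) * eval r (rootsPoly R'))
  refine ⟨P, hP, Q, hQ, fun r hr => ?_, fun r hr => ?_⟩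
  · rw [hPx r (Finset.mem_union_left _ hr), if_pos hr]
  · have hrs : r ∉ s := Finset.disjoint_right.mp hs hr
    by_cases hr' : r ∈ R'
    · rw [hPx r (Finset.mem_union_right _ hr'), if_neg hrs, mul_div_cancel₀ _ (hc r hr),
        eval_rootsPoly_eq_zero_iff.mpr hr', mul_zero, zero_mul, add_zero]
    · rw [hQy r (Finset.mem_sdiff.mpr ⟨hr, hr'⟩), mul_div_cancel₀, add_sub_cancel]
      exact mul_ne_zero (mul_ne_zero (hd r hr) (mt eval_rootsPoly_eq_zero_iff.mp hrs))
        (mt eval_rootsPoly_eq_zero_iff.mp hr')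

lemma exists_finset_card_eq_of_finite {α : Type*} [Infinite α] {d : ℤ} (hd : 0 ≤ d) {Z : Set α}
    (hZ : Z.Finite) : ∃ s : Finset α, (s.card : ℤ) = d ∧ ∀ r ∈ s, r ∉ Z := by
  obtain ⟨s, hs, hcard⟩ := hZ.infinite_compl.exists_subset_card_eq d.toNat
  exact ⟨s, by omega, fun r hr => hs hr⟩

lemma eval_coeff_pencilDet (k n : ℕ) (S : ℕ → ℕ → F[X]) (r : F) :
    eval r ((pencilDet k S).coeff n) = (pencilDet k fun i j => eval r (S i j)).coeff n := by
  rw [← coe_evalRingHom, ← coeff_map, pencilDet_map]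

end RootsPoly

section Frame

open Polynomial

variable {F : Type*} [Field F] {k m p : ℕ} {e f : ℕ → ℤ} {S : ℕ → ℕ → F[X]} {R : ℕ → Finset F}

/-- The base points of the induction: the first `k` rows of `S` have Hessenberg shape and satisfy
the degree bounds, and their superdiagonal entries have the largest possible degree and simple
roots, no two of which agree. -/
structure IsFrame (k m : ℕ) (e f : ℕ → ℤ) (S : ℕ → ℕ → F[X]) (R : ℕ → Finset F) : Prop where
  mem_entriesLE : S ∈ entriesLE F m e f
  eq_zero : ∀ i < k, ∀ j, i + 1 < j → S i j = 0
  superdiag : ∀ i < k, S i (i + 1) = rootsPoly (R i)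
  card : ∀ i < k, ((R i).card : ℤ) = f i - e (i + 1) + m
  disjoint : ∀ i < k, ∀ j < k, i ≠ j → Disjoint (R i) (R j)
  isUnit_col : ∀ i < k, IsUnit (S i 0)
  diag_ne_zero : ∀ i < k, S i i ≠ 0

namespace IsFrame

lemma eval_superdiag_eq_zero_iff (hS : IsFrame k m e f S R) {l : ℕ} (hl : l < k) {r : F} :
    eval r (S l (l + 1)) = 0 ↔ r ∈ R l := by
  rw [hS.superdiag l hl, eval_rootsPoly_eq_zero_iff]

lemma eval_superdiag_ne_zero (hS : IsFrame k m e f S R) {i l : ℕ} (hi : i < k) (hl : l < k)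
    (hli : l ≠ i) {r : F} (hr : r ∈ R i) : eval r (S l (l + 1)) ≠ 0 :=
  fun h => Finset.disjoint_left.mp (hS.disjoint l hl i hi hli)
    ((hS.eval_superdiag_eq_zero_iff hl).mp h) hr

lemma eval_col_ne_zero (hS : IsFrame k m e f S R) {i : ℕ} (hi : i < k) (r : F) :
    eval r (S i 0) ≠ 0 :=
  ((hS.isUnit_col i hi).map (evalRingHom r)).ne_zero

lemma prod_superdiag (hS : IsFrame k m e f S R) {l : ℕ} (hl : l ≤ k) :
    ∏ i ∈ Finset.range l, S i (i + 1) = ∏ i ∈ Finset.range l, rootsPoly (R i) :=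
  Finset.prod_congr rfl fun i hi => hS.superdiag i ((Finset.mem_range.mp hi).trans_le hl)

lemma exists_eval_coeff_two_row_eq (hS : IsFrame (p + 1) m e f S R) {i : ℕ} (hi : i < p) {r : F}
    (hr : r ∈ R i) : ∃ c : F, c ≠ 0 ∧ ∀ z : ℕ → F[X],
      eval r ((pencilDet (p + 2) (Function.update S (p + 1) z)).coeff 2) =
        c * eval r (z (i + 1)) := by
  obtain ⟨q, rfl⟩ : ∃ q, p = i + q := ⟨p - i, by omega⟩
  refine ⟨(-1) ^ (i + q) * ((eval r (S i 0) * ∏ l ∈ Finset.range i, eval r (S l (l + 1))) *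
    ∏ l ∈ Finset.range q, eval r (S (i + 1 + l) (i + 1 + (l + 1)))), ?_, fun z => ?_⟩
  · refine mul_ne_zero (by simp) (mul_ne_zero (mul_ne_zero (hS.eval_col_ne_zero (by omega) r) ?_)
      ?_) <;> refine Finset.prod_ne_zero_iff.mpr fun l hl => ?_ <;>
      have hl := Finset.mem_range.mp hl <;>
      exact hS.eval_superdiag_ne_zero (by omega) (by omega) (by omega) hr
  · have update_of_lt {l : ℕ} (hl : l < i + q + 1) : Function.update S (i + q + 1) z l = S l :=
      Function.update_of_ne hl.ne _ _
    rw [eval_coeff_pencilDet, show i + q + 2 = i + 1 + (q + 1) by omega,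
      coeff_two_pencilDet_of_split, update_of_lt (by omega), show i + 1 + q = i + q + 1 by omega,
      Function.update_self, Finset.prod_congr rfl fun l hl => by
        rw [update_of_lt (by rw [Finset.mem_range] at hl; omega)],
      Finset.prod_congr (s₁ := Finset.range q) rfl fun l hl => by
        rw [update_of_lt (by rw [Finset.mem_range] at hl; omega)]]
    · ring
    · intro l hl j hj
      rw [update_of_lt (by omega)]
      by_cases h : l = i ∧ j = 0
      · obtain ⟨rfl, rfl⟩ := h
        exact (hS.eval_superdiag_eq_zero_iff (by omega)).mpr hr
      · rw [hS.eq_zero l (by omega) _ (by omega), eval_zero]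

lemma exists_eval_coeff_two_col_eq (hS : IsFrame (p + 1) m e f S R) {i : ℕ} (hi : i < p) {r : F}
    (hr : r ∈ R i) : ∃ d : F, d ≠ 0 ∧ ∀ z : ℕ → F[X], z 0 = 0 → ∀ y : ℕ → F[X],
      eval r ((∑ l ∈ Finset.range p, pencilDet (p + 2) (Function.update
        (Function.update S (p + 1) z) l (Pi.single (p + 1) (y l)))).coeff 2) =
      d * eval r (z (i + 1)) * eval r (y i) := by
  refine ⟨-((-1) ^ p * (eval r (S p 0) *
    ∏ l ∈ (Finset.range p).erase i, eval r (S l (l + 1)))), ?_, fun z hz y => ?_⟩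
  · refine neg_ne_zero.mpr (mul_ne_zero (by simp)
      (mul_ne_zero (hS.eval_col_ne_zero p.lt_succ_self r) ?_))
    refine Finset.prod_ne_zero_iff.mpr fun l hl => ?_
    obtain ⟨hli, hl⟩ := Finset.mem_erase.mp hl
    have hl := Finset.mem_range.mp hl
    exact hS.eval_superdiag_ne_zero (by omega) (by omega) hli hr
  · have hessenberg : ∀ l < p, ∀ c, l + 1 < c → S l c = 0 := fun l hl => hS.eq_zero l (by omega)
    rw [finsetSum_coeff, eval_finsetSum, Finset.sum_eq_single_of_mem i (Finset.mem_range.mpr hi),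
      coeff_two_pencilDet_update_single hi hessenberg hz]
    · simp only [eval_neg, eval_mul, eval_pow, eval_one, eval_prod]
      ring
    · intro l hl hli
      have prod_eq_zero : eval r (∏ j ∈ (Finset.range p).erase l, S j (j + 1)) = 0 := by
        rw [eval_prod]
        exact Finset.prod_eq_zero (Finset.mem_erase.mpr ⟨hli.symm, Finset.mem_range.mpr hi⟩)
          ((hS.eval_superdiag_eq_zero_iff (by omega)).mpr hr)
      rw [coeff_two_pencilDet_update_single (Finset.mem_range.mp hl) hessenberg hz]
      simp only [eval_neg, eval_mul, prod_eq_zero, mul_zero, neg_zero]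

/-- A target is determined by its values at the roots of `rootsPoly s` and by its coefficient of
`x ^ 2` at the roots of the superdiagonal entries, up to targets of smaller size. -/
lemma exists_eq_X_mul_C_mul (hS : IsFrame (p + 1) m e f S R) {s : Finset F} {d : ℤ}
    (hs : ∀ i < p, Disjoint s (R i)) {b : F[X]} {Q : F[X][X]}
    (hQ : Q ∈ targets (p + 2) m (d + s.card) b) (hQ1 : Q.coeff 1 = 0)
    (hQs : ∀ r ∈ s, ∀ n, eval r (Q.coeff n) = 0)
    (hQ2 : ∀ i < p, ∀ r ∈ R i, eval r (Q.coeff 2) = 0) :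
    ∃ Q' ∈ targets (p + 1) m d (∏ i ∈ Finset.range p, S i (i + 1)),
      Q = X * C (rootsPoly s) * Q' := by
  obtain ⟨hQ0, hQk, hQw, -⟩ := hQ
  have rootsPoly_ne_zero := Lagrange.nodal_ne_zero (s := s) (v := id)
  obtain ⟨Q₁, rfl⟩ := X_dvd_iff.mpr hQ0
  obtain ⟨Q', rfl⟩ : C (rootsPoly s) ∣ Q₁ := (C_dvd_iff_dvd_coeff _ _).mpr fun n =>
    rootsPoly_dvd fun r hr => by simpa only [coeff_X_mul] using hQs r hr (n + 1)
  refine ⟨Q', ⟨?_, fun j hj => ?_, fun j => ?_, ?_⟩, by ring⟩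
  · simpa only [coeff_X_mul, coeff_C_mul, mul_eq_zero, rootsPoly_ne_zero, false_or] using hQ1
  · simpa only [coeff_X_mul, coeff_C_mul, mul_eq_zero, rootsPoly_ne_zero, false_or]
      using hQk (j + 1) (by omega)
  · refine mem_intDegreeLE_of_monic_mul (Lagrange.nodal_monic (s := s) (v := id)) ?_
    rw [← coeff_C_mul, ← coeff_X_mul, Lagrange.natDegree_nodal]
    convert hQw (j + 1) using 2
    push_cast
    ring
  · rw [hS.prod_superdiag p.le_succ]
    refine prod_rootsPoly_dvd (fun i hi j hj => ?_) fun i hi r hr => ?_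
    · have hi := Finset.mem_range.mp hi
      have hj := Finset.mem_range.mp hj
      exact hS.disjoint i (by omega) j (by omega)
    · have hi := Finset.mem_range.mp hi
      have h := hQ2 i hi r hr
      rw [coeff_X_mul, coeff_C_mul, eval_mul, mul_eq_zero, eval_rootsPoly_eq_zero_iff] at h
      exact h.resolve_left (Finset.disjoint_right.mp (hs i hi) hr)

lemma exists_coeff_one_eq (hS : IsFrame k m e f S R) {P : F[X][X]}
    (hP : P ∈ targets (k + 1) m (∑ i ∈ Finset.range (k + 1), (f i - e i))
      (∏ i ∈ Finset.range k, S i (i + 1))) :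
    ∃ D ∈ intDegreeLE F (f k - e 0),
      P.coeff 1 = (-1) ^ k * (D * ∏ i ∈ Finset.range k, S i (i + 1)) := by
  obtain ⟨-, -, hPw, D, hD⟩ := hP
  have hPw := hPw 1
  rw [hD, hS.prod_superdiag le_rfl] at hPw
  have prod_monic : (∏ i ∈ Finset.range k, rootsPoly (R i)).Monic :=
    monic_prod_of_monic _ _ fun i _ => Lagrange.nodal_monic
  have natDegree_prod : ((∏ i ∈ Finset.range k, rootsPoly (R i)).natDegree : ℤ) =
      ∑ i ∈ Finset.range k, f i - ∑ i ∈ Finset.range k, e (i + 1) + k * m := by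
    rw [natDegree_prod_of_monic _ _ fun i _ => Lagrange.nodal_monic, Nat.cast_sum,
      Finset.sum_congr rfl fun i hi => by
        rw [Lagrange.natDegree_nodal, hS.card i (Finset.mem_range.mp hi)],
      Finset.sum_add_distrib, Finset.sum_sub_distrib]
    simp
  have hD' : D ∈ intDegreeLE F (f k - e 0) := by
    refine mem_intDegreeLE_of_monic_mul prod_monic ?_
    convert hPw using 2
    rw [natDegree_prod, Finset.sum_sub_distrib, Finset.sum_range_succ f, Finset.sum_range_succ' e]
    push_cast
    ring
  refine ⟨(-1) ^ k * D, ?_, ?_⟩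
  · rcases neg_one_pow_eq_or F[X] k with h | h
    · rwa [h, one_mul]
    · rw [h, neg_one_mul]
      exact neg_mem hD'
  · rw [hD, mul_assoc, ← mul_assoc, ← mul_pow, neg_one_mul, neg_neg, one_pow, one_mul, mul_comm]

end IsFrame

end Frame

section Degeneration

open Polynomial

variable {F : Type*} [Field F] {m p : ℕ} {e f : ℕ → ℤ} {S : ℕ → ℕ → F[X]} {R R' : ℕ → Finset F}
  {s : Finset F}

lemma IsFrame.exists_row_eval_eq (hS : IsFrame (p + 1) m e f S R) {r : F}
    (hr : ∀ i < p + 1, r ∉ R i) (diag_ne : ∀ i < p + 1, eval r (S i i) ≠ 0) {P : F[X][X]}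
    (hP0 : P.coeff 0 = 0) (hPp : ∀ j, p + 2 ≤ j → P.coeff j = 0) :
    ∃ z : ℕ → F, ∀ w : ℕ → F[X],
      P.coeff 1 = (-1) ^ (p + 1) * (w 0 * ∏ i ∈ Finset.range (p + 1), S i (i + 1)) →
      w (p + 1) = 0 → (∀ i < p, eval r (w (i + 1)) = z i) →
      ∀ n, eval r ((pencilDet (p + 2) (Function.update S (p + 1) w)).coeff n) =
        eval r (P.coeff n) := by
  have superdiag_ne : ∀ i < p + 1, eval r (S i (i + 1)) ≠ 0 := fun i hi =>
    mt (hS.eval_superdiag_eq_zero_iff hi).mp (hr i hi)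
  obtain ⟨z, z_last, hz⟩ := exists_row_apply_last_eq_zero_pencilDet_eq
    (S := fun i j => eval r (S i j)) (Q := P.map (evalRingHom r))
    (fun i hi j hj => by rw [hS.eq_zero i hi j hj, eval_zero]) diag_ne superdiag_ne
    (by rw [coeff_map, hP0, map_zero]) (fun j hj => by rw [coeff_map, hPp j hj, map_zero])
  have coeff_eq (n : ℕ) : (pencilDet (p + 2)
      (Function.update (fun i j => eval r (S i j)) (p + 1) z)).coeff n = eval r (P.coeff n) := by
    rw [hz, coeff_map, coe_evalRingHom]
  refine ⟨fun i => z (i + 1), fun w hw0 hwp hw n => ?_⟩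
  have z_zero : eval r (w 0) = z 0 := by
    have h := coeff_eq 1
    rw [coeff_pencilDet_one, hw0, Function.update_self, Finset.prod_congr rfl fun i hi => by
      rw [Function.update_of_ne (Finset.mem_range.mp hi).ne]] at h
    simp only [eval_mul, eval_pow, eval_neg, eval_one, eval_prod] at h
    have prod_ne : ∏ i ∈ Finset.range (p + 1), eval r (S i (i + 1)) ≠ 0 :=
      Finset.prod_ne_zero_iff.mpr fun i hi => superdiag_ne i (Finset.mem_range.mp hi)
    exact (mul_right_cancel₀ prod_ne (mul_left_cancel₀ (by simp) h)).symm
  rw [eval_coeff_pencilDet, ← coeff_eq]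
  refine congrArg (coeff · n) (pencilDet_congr fun i hi j hj => ?_)
  rcases eq_or_ne i (p + 1) with rfl | hip
  · rw [Function.update_self, Function.update_self]
    rcases j with _ | j
    · exact z_zero
    · rcases (show j ≤ p by omega).lt_or_eq with hj | rfl
      · exact hw j hj
      · rw [hwp, eval_zero, z_last]
  · rw [Function.update_of_ne hip, Function.update_of_ne hip]

/-- The data for the next row of a frame: the roots `s` of its diagonal entry and, for each column,
a part `R' i` of the roots of the superdiagonal entry. The values of a target at the roots in `R' i`
are controlled by the new row, those at the other roots by the new column, and `card_subset` says
that the degree bounds leave enough freedom for this. -/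
structure IsRootSplitting (p m : ℕ) (e f : ℕ → ℤ) (S : ℕ → ℕ → F[X]) (R : ℕ → Finset F)
    (s : Finset F) (R' : ℕ → Finset F) : Prop extends IsFrame (p + 1) m e f S R where
  card_diag : (s.card : ℤ) = f (p + 1) - e (p + 1)
  disjoint_diag : ∀ i < p + 1, Disjoint s (R i)
  eval_diag_ne_zero : ∀ r ∈ s, ∀ i < p + 1, eval r (S i i) ≠ 0
  subset : ∀ i < p + 1, R' i ⊆ R i
  card_subset : ∀ i < p + 1, ((R' i).card : ℤ) = min (e (p + 1) - e (i + 1)) (R i).card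

/-- The row with entry `0` in column `0` and with roots `R' i` in the column `i + 1`. -/
noncomputable def splitRow (p : ℕ) (R' : ℕ → Finset F) : ℕ → F[X]
  | 0 => 0
  | i + 1 => if i < p + 1 then rootsPoly (R' i) else 0

lemma splitRow_succ {i : ℕ} (hi : i < p + 1) : splitRow p R' (i + 1) = rootsPoly (R' i) :=
  if_pos hi

/-- The limit, as `a → 0`, of the derivatives at the arrays with last row
`u + a • (rootsPoly s • splitRow p R' - u)`, where `u = Pi.single (p + 1) (rootsPoly s)`,
precomposed with the division of the last column by `a`. -/
noncomputable def limitDeriv (p : ℕ) (S : ℕ → ℕ → F[X]) (s : Finset F) (R' : ℕ → Finset F) :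
    (ℕ → ℕ → F[X]) →ₗ[F] F[X][X] :=
  pencilDeriv F (p + 2) (Function.update S (p + 1) (Pi.single (p + 1) (rootsPoly s))) +
    pencilDeriv F (p + 2) (Function.update S (p + 1) (rootsPoly s • splitRow p R')) ∘ₗ
      colProj F (p + 1)

lemma limitDeriv_apply {E : ℕ → ℕ → F[X]} (hE : E ∈ tangents F (p + 2) m e f) :
    limitDeriv p S s R' E = pencilDet (p + 2) (Function.update S (p + 1) (E (p + 1))) +
      rootsPoly s • (X * pencilDeriv F (p + 1) S E + ∑ l ∈ Finset.range p, pencilDet (p + 2)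
        (Function.update (Function.update S (p + 1) (splitRow p R')) l
          (Pi.single (p + 1) (E l (p + 1))))) := by
  obtain ⟨-, diag, superdiag, -⟩ := hE
  have deriv_splitRow : pencilDeriv F (p + 2)
      (Function.update S (p + 1) (rootsPoly s • splitRow p R')) (colProj F (p + 1) E) =
      rootsPoly s • ∑ l ∈ Finset.range p, pencilDet (p + 2)
        (Function.update (Function.update S (p + 1) (splitRow p R')) l
          (Pi.single (p + 1) (E l (p + 1)))) := by
    have term_eq_zero {l : ℕ} (hl : l < p + 2) (hEl : E l (p + 1) = 0) : pencilDet (p + 2)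
        (Function.update (Function.update S (p + 1) (rootsPoly s • splitRow p R')) l
          (colProj F (p + 1) E l)) = 0 :=
      pencilDet_eq_zero_of_row hl fun j _ => by
        rw [Function.update_self, colProj_apply, hEl, Pi.single_zero, Pi.zero_apply]
    rw [pencilDeriv_apply, Finset.sum_range_succ, Finset.sum_range_succ,
      term_eq_zero (by omega) (superdiag p), term_eq_zero (by omega) (diag (p + 1)), add_zero,
      add_zero, Finset.smul_sum]
    refine Finset.sum_congr rfl fun l hl => ?_
    have hlp : l ≠ p + 1 := by rw [Finset.mem_range] at hl; omega
    rw [colProj_apply, Function.update_comm hlp.symm, pencilDet_update_smul (p + 1).lt_succ_self,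
      Function.update_comm hlp]
  rw [limitDeriv, LinearMap.add_apply, LinearMap.comp_apply, pencilDeriv_update_last_single,
    deriv_splitRow, smul_eq_C_mul, smul_eq_C_mul]
  ring

lemma coeff_one_limitDeriv {E : ℕ → ℕ → F[X]} (hE : E ∈ tangents F (p + 2) m e f) :
    (limitDeriv p S s R' E).coeff 1 =
      (-1) ^ (p + 1) * (E (p + 1) 0 * ∏ i ∈ Finset.range (p + 1), S i (i + 1)) := by
  have coeff_zero_deriv : (pencilDeriv F (p + 1) S E).coeff 0 = 0 := by
    rw [coeff_pencilDeriv]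
    exact Finset.sum_eq_zero fun i _ => coeff_pencilDet_zero _ _
  rw [limitDeriv_apply hE, coeff_add, coeff_smul, coeff_add, coeff_X_mul, coeff_zero_deriv,
    finsetSum_coeff, Finset.sum_eq_zero, add_zero, smul_zero, add_zero, coeff_pencilDet_one,
    Function.update_self]
  · congr 2
    exact Finset.prod_congr rfl fun i hi => by
      rw [Function.update_of_ne (Finset.mem_range.mp hi).ne]
  · intro l hl
    have hlp : p + 1 ≠ l := by rw [Finset.mem_range] at hl; omega
    rw [coeff_pencilDet_one, Function.update_of_ne hlp, Function.update_self, splitRow, zero_mul,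
      mul_zero]

lemma eval_coeff_limitDeriv_of_mem {E : ℕ → ℕ → F[X]} (hE : E ∈ tangents F (p + 2) m e f) {r : F}
    (hr : r ∈ s) (n : ℕ) : eval r ((limitDeriv p S s R' E).coeff n) =
      eval r ((pencilDet (p + 2) (Function.update S (p + 1) (E (p + 1)))).coeff n) := by
  rw [limitDeriv_apply hE, coeff_add, coeff_smul, eval_add, smul_eq_mul, eval_mul,
    eval_rootsPoly_eq_zero_iff.mpr hr, zero_mul, add_zero]

lemma IsFrame.exists_eval_coeff_two_limitDeriv_eq (hS : IsFrame (p + 1) m e f S R) {i : ℕ}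
    (hi : i < p) {r : F} (hr : r ∈ R i) : ∃ c d : F, c ≠ 0 ∧ d ≠ 0 ∧
      ∀ E ∈ tangents F (p + 2) m e f, eval r ((limitDeriv p S s R' E).coeff 2) =
        c * eval r (E (p + 1) (i + 1)) +
          d * eval r (rootsPoly s) * eval r (rootsPoly (R' i)) * eval r (E i (p + 1)) := by
  obtain ⟨c, hc, coeff_row⟩ := hS.exists_eval_coeff_two_row_eq hi hr
  obtain ⟨d, hd, coeff_col⟩ := hS.exists_eval_coeff_two_col_eq hi hr
  refine ⟨c, d, hc, hd, fun E hE => ?_⟩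
  have coeff_one_deriv : eval r ((pencilDeriv F (p + 1) S E).coeff 1) = 0 := by
    rw [coeff_one_pencilDeriv S fun l _ => hE.2.2.1 l, eval_mul, eval_mul, eval_prod,
      Finset.prod_eq_zero (Finset.mem_range.mpr hi) ((hS.eval_superdiag_eq_zero_iff (by omega)).mpr
        hr), mul_zero, mul_zero]
  rw [limitDeriv_apply hE, coeff_add, eval_add, coeff_row, coeff_smul, coeff_add, coeff_X_mul,
    smul_eq_mul, eval_mul, eval_add, coeff_one_deriv, coeff_col _ rfl fun l => E l (p + 1),
    splitRow_succ (by omega)]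
  ring

/-- The array that vanishes outside the row `p + 1`, with entries `D, w 0, …, w (p - 1), 0`, and the
column `p + 1`, with entries `B 0, …, B (p - 1), 0, 0`. -/
noncomputable def border (p : ℕ) (D : F[X]) (w B : ℕ → F[X]) : ℕ → ℕ → F[X] :=
  Function.update (fun i => Pi.single (p + 1) (if i < p then B i else 0)) (p + 1)
    fun | 0 => D | j + 1 => if j < p then w j else 0

lemma border_last_zero (D : F[X]) (w B : ℕ → F[X]) : border p D w B (p + 1) 0 = D := by
  rw [border, Function.update_self]

lemma border_last_succ (D : F[X]) (w B : ℕ → F[X]) (j : ℕ) :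
    border p D w B (p + 1) (j + 1) = if j < p then w j else 0 := by
  rw [border, Function.update_self]

lemma border_of_ne (D : F[X]) (w B : ℕ → F[X]) {i : ℕ} (hi : i ≠ p + 1) :
    border p D w B i = Pi.single (p + 1) (if i < p then B i else 0) := by
  rw [border, Function.update_of_ne hi]

lemma border_mem_tangents {D : F[X]} {w B : ℕ → F[X]} (hD : D ∈ intDegreeLE F (f (p + 1) - e 0))
    (hw : ∀ i < p, w i ∈ intDegreeLE F (f (p + 1) - e (i + 1)))
    (hB : ∀ i < p, B i ∈ intDegreeLE F (f i - e (p + 1) + m)) :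
    border p D w B ∈ tangents F (p + 2) m e f := by
  refine ⟨mem_entriesLE.mpr fun i => ?_, fun i => ?_, fun i => ?_, fun i j hij => ?_⟩ <;>
    rcases eq_or_ne i (p + 1) with rfl | hi
  · refine mem_rowLE.mpr fun j => ?_
    rcases j with _ | j
    · rwa [border_last_zero, entryBound_of_le (Nat.zero_le _)]
    · rw [border_last_succ]
      split_ifs with hj
      · rw [entryBound_of_le (by omega)]
        exact hw j hj
      · exact zero_mem _
  · rw [border_of_ne D w B hi]
    refine single_mem_rowLE ?_
    split_ifs with hip
    · rw [entryBound_of_lt (by omega)]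
      exact hB i hip
    · exact zero_mem _
  · rw [border_last_succ, if_neg (lt_irrefl p)]
  · rw [border_of_ne D w B hi, Pi.single_eq_of_ne hi]
  · rw [border_last_succ, if_neg (by omega)]
  · rw [border_of_ne D w B hi]
    rcases eq_or_ne i p with rfl | hip
    · rw [if_neg (lt_irrefl i), Pi.single_zero, Pi.zero_apply]
    · rw [Pi.single_eq_of_ne (by omega)]
  · obtain ⟨j, rfl⟩ := Nat.exists_eq_succ_of_ne_zero (by omega : j ≠ 0)
    rw [border_last_succ, if_neg (by omega)]
  · rw [border_of_ne D w B hi]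
    rcases hij with hij | hij
    · rw [if_neg (by omega), Pi.single_zero, Pi.zero_apply]
    · rw [Pi.single_eq_of_ne (by omega)]
namespace IsRootSplitting

lemma single_mem_rowLE (h : IsRootSplitting p m e f S R s R') :
    Pi.single (p + 1) (rootsPoly s) ∈ rowLE F m e f (p + 1) :=
  _root_.single_mem_rowLE (rootsPoly_mem_intDegreeLE s
    (by rw [h.card_diag, entryBound_of_le le_rfl]))

lemma smul_splitRow_mem_rowLE (h : IsRootSplitting p m e f S R s R') :
    rootsPoly s • splitRow p R' ∈ rowLE F m e f (p + 1) := by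
  refine mem_rowLE.mpr fun j => ?_
  rw [Pi.smul_apply, smul_eq_mul]
  rcases j with _ | i
  · rw [splitRow, mul_zero]
    exact zero_mem _
  · rw [splitRow]
    split_ifs with hi
    · have key := mul_mem_intDegreeLE (rootsPoly_mem_intDegreeLE s le_rfl)
        (rootsPoly_mem_intDegreeLE (R' i) le_rfl)
      refine intDegreeLE_mono ?_ key
      have := h.card_subset i hi
      have := h.card_diag
      rw [entryBound_of_le (by omega)]
      omega
    · rw [mul_zero]
      exact zero_mem _

lemma map_limitDeriv_le_targets (h : IsRootSplitting p m e f S R s R') :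
    (tangents F (p + 2) m e f).map (limitDeriv p S s R') ≤
      targets (p + 2) m (∑ i ∈ Finset.range (p + 2), (f i - e i))
        (∏ i ∈ Finset.range (p + 1), S i (i + 1)) := by
  rintro _ ⟨E, hE, rfl⟩
  exact add_mem
    (map_pencilDeriv_update_le_targets h.mem_entriesLE h.single_mem_rowLE
      (Submodule.mem_map_of_mem hE))
    (map_pencilDeriv_update_le_targets h.mem_entriesLE h.smul_splitRow_mem_rowLE
      (Submodule.mem_map_of_mem (colProj_mem_tangents hE)))

lemma exists_border (h : IsRootSplitting p m e f S R s R') {D : F[X]}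
    (hD : D ∈ intDegreeLE F (f (p + 1) - e 0)) {c d : ℕ → F → F}
    (hc : ∀ i < p, ∀ r ∈ R i, c i r ≠ 0) (hd : ∀ i < p, ∀ r ∈ R i, d i r ≠ 0) (x : F → ℕ → F)
    (y : F → F) :
    ∃ E ∈ tangents F (p + 2) m e f, E (p + 1) 0 = D ∧
      (∀ i < p, ∀ r ∈ s, eval r (E (p + 1) (i + 1)) = x r i) ∧
      ∀ i < p, ∀ r ∈ R i, c i r * eval r (E (p + 1) (i + 1)) +
        d i r * eval r (rootsPoly s) * eval r (rootsPoly (R' i)) * eval r (E i (p + 1)) = y r := by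
  have exists_pair (i : ℕ) (hi : i < p) := by
    have card_R := h.card i (by omega)
    have card_R' := h.card_subset i (by omega)
    have card_s := h.card_diag
    exact exists_interpolating_pair (h.disjoint_diag i (by omega)) (h.subset i (by omega))
      (a := f (p + 1) - e (i + 1)) (b := f i - e (p + 1) + m) (by omega) (by omega) (hc i hi)
      (hd i hi) (fun r => x r i) y
  choose! w hw B hB hws hwB using exists_pair
  refine ⟨border p D w B, border_mem_tangents hD hw hB, border_last_zero D w B,
    fun i hi r hr => ?_, fun i hi r hr => ?_⟩
  · rw [border_last_succ, if_pos hi, hws i hi r hr]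
  · rw [border_last_succ, if_pos hi, border_of_ne D w B (by omega), Pi.single_eq_same, if_pos hi,
      hwB i hi r hr]

lemma exists_tangent_agreeing (h : IsRootSplitting p m e f S R s R') {P : F[X][X]}
    (hP : P ∈ targets (p + 2) m (∑ i ∈ Finset.range (p + 2), (f i - e i))
      (∏ i ∈ Finset.range (p + 1), S i (i + 1))) :
    ∃ E ∈ tangents F (p + 2) m e f, (limitDeriv p S s R' E).coeff 1 = P.coeff 1 ∧
      (∀ r ∈ s, ∀ n, eval r ((limitDeriv p S s R' E).coeff n) = eval r (P.coeff n)) ∧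
      ∀ i < p, ∀ r ∈ R i, eval r ((limitDeriv p S s R' E).coeff 2) = eval r (P.coeff 2) := by
  obtain ⟨D, hD, hPD⟩ := h.exists_coeff_one_eq hP
  have row_at (r : F) (hr : r ∈ s) := h.exists_row_eval_eq
    (fun i hi => Finset.disjoint_left.mp (h.disjoint_diag i hi) hr) (h.eval_diag_ne_zero r hr)
    hP.1 hP.2.1
  have coeff_two_at (i : ℕ) (hi : i < p) (r : F) (hr : r ∈ R i) :=
    h.exists_eval_coeff_two_limitDeriv_eq (s := s) (R' := R') hi hr
  choose! x hx using row_at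
  choose! c d hc hd coeff_two using coeff_two_at
  obtain ⟨E, hE, hED, hEs, hER⟩ := h.exists_border hD hc hd x fun r => eval r (P.coeff 2)
  refine ⟨E, hE, ?_, fun r hr n => ?_, fun i hi r hr => ?_⟩
  · rw [coeff_one_limitDeriv hE, hED, hPD]
  · rw [eval_coeff_limitDeriv_of_mem hE hr]
    exact hx r hr _ (by rw [hED, hPD]) (hE.2.1 _) (fun i hi => hEs i hi r hr) n
  · rw [coeff_two i hi r hr E hE, hER i hi r hr]

lemma limitDeriv_of_mem_tangents {E : ℕ → ℕ → F[X]} (hE : E ∈ tangents F (p + 1) m e f) :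
    limitDeriv p S s R' E = X * C (rootsPoly s) * pencilDeriv F (p + 1) S E := by
  have apply_eq_zero := hE.2.2.2
  rw [limitDeriv_apply (tangents_mono (p + 1).le_succ hE), pencilDet_eq_zero_of_row
    (p + 1).lt_succ_self fun j _ => by rw [Function.update_self, apply_eq_zero _ _ (.inl le_rfl)],
    Finset.sum_eq_zero, smul_eq_C_mul]
  · ring
  · intro l hl
    have hl := Finset.mem_range.mp hl
    exact pencilDet_eq_zero_of_row (i := l) (by omega) fun j _ => by
      rw [Function.update_self, apply_eq_zero _ _ (.inr le_rfl), Pi.single_zero, Pi.zero_apply]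

lemma targets_le_map_limitDeriv (h : IsRootSplitting p m e f S R s R')
    (hT : targets (p + 1) m (∑ i ∈ Finset.range (p + 1), (f i - e i))
      (∏ i ∈ Finset.range p, S i (i + 1)) ≤
        (tangents F (p + 1) m e f).map (pencilDeriv F (p + 1) S)) :
    targets (p + 2) m (∑ i ∈ Finset.range (p + 2), (f i - e i))
      (∏ i ∈ Finset.range (p + 1), S i (i + 1)) ≤
        (tangents F (p + 2) m e f).map (limitDeriv p S s R') := by
  intro P hP
  obtain ⟨E, hE, h1, hs, h2⟩ := h.exists_tangent_agreeing hP
  have sub_mem_targets := sub_mem hP (h.map_limitDeriv_le_targets (Submodule.mem_map_of_mem hE))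
  rw [Finset.sum_range_succ, ← h.card_diag] at sub_mem_targets
  obtain ⟨Q, hQ, hPQ⟩ := h.exists_eq_X_mul_C_mul (fun i hi => h.disjoint_diag i (by omega))
    sub_mem_targets (by rw [coeff_sub, h1, sub_self])
    (fun r hr n => by rw [coeff_sub, eval_sub, hs r hr n, sub_self])
    (fun i hi r hr => by rw [coeff_sub, eval_sub, h2 i hi r hr, sub_self])
  obtain ⟨E', hE', rfl⟩ := hT hQ
  refine ⟨E + E', add_mem hE (tangents_mono (p + 1).le_succ hE'), ?_⟩
  rw [map_add, limitDeriv_of_mem_tangents hE', ← hPQ, add_sub_cancel]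

end IsRootSplitting

lemma IsFrame.exists_isRootSplitting [Infinite F] (hS : IsFrame (p + 1) m e f S R)
    (he : Monotone e) (hef : e (p + 1) ≤ f (p + 1)) : ∃ s R', IsRootSplitting p m e f S R s R' := by
  have finite_avoided : (⋃ i ∈ Set.Iio (p + 1), (R i : Set F) ∪ {r | IsRoot (S i i) r}).Finite :=
    (Set.finite_Iio (p + 1)).biUnion fun i hi =>
      (R i).finite_toSet.union (finite_setOfPred_isRoot (hS.diag_ne_zero i hi))
  obtain ⟨s, hs, hsZ⟩ := exists_finset_card_eq_of_finite (sub_nonneg.mpr hef) finite_avoided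
  have notMem (r : F) (hr : r ∈ s) (i : ℕ) (hi : i < p + 1) :
      r ∉ (R i : Set F) ∪ {r | IsRoot (S i i) r} :=
    fun h => hsZ r hr (Set.mem_biUnion hi h)
  have exists_subset (i : ℕ) (hi : i < p + 1) : ∃ s' ⊆ R i,
      (s'.card : ℤ) = min (e (p + 1) - e (i + 1)) (R i).card := by
    obtain ⟨s', hs', hcard⟩ := Finset.exists_subset_card_eq
      (show (min (e (p + 1) - e (i + 1)) (R i).card).toNat ≤ (R i).card by omega)
    have := he (show i + 1 ≤ p + 1 by omega)
    exact ⟨s', hs', by omega⟩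
  choose! R' hR' hcard using exists_subset
  exact ⟨s, R', hS, hs,
    fun i hi => Finset.disjoint_left.mpr fun r hr hri => notMem r hr i hi (.inl hri),
    fun r hr i hi hri => notMem r hr i hi (.inr hri), hR', hcard⟩

lemma IsRootSplitting.exists_row_apply_zero_eq_zero [Infinite F]
    (h : IsRootSplitting p m e f S R s R')
    (hT : targets (p + 1) m (∑ i ∈ Finset.range (p + 1), (f i - e i))
      (∏ i ∈ Finset.range p, S i (i + 1)) ≤
        (tangents F (p + 1) m e f).map (pencilDeriv F (p + 1) S)) :
    ∃ z ∈ rowLE F m e f (p + 1), z 0 = 0 ∧ z (p + 1) ≠ 0 ∧ (∀ j, p + 1 < j → z j = 0) ∧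
      targets (p + 2) m (∑ i ∈ Finset.range (p + 2), (f i - e i))
        (∏ i ∈ Finset.range (p + 1), S i (i + 1)) ≤
          (tangents F (p + 2) m e f).map
            (pencilDeriv F (p + 2) (Function.update S (p + 1) z)) := by
  set u : ℕ → F[X] := Pi.single (p + 1) (rootsPoly s) with hu
  set y : ℕ → F[X] := rootsPoly s • splitRow p R' with hy
  have deriv_u_colProj (E : ℕ → ℕ → F[X]) (hE : E ∈ tangents F (p + 2) m e f) :
      pencilDeriv F (p + 2) (Function.update S (p + 1) u) (colProj F (p + 1) E) = 0 :=
    pencilDeriv_colProj_of_row_last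
      (fun j hj => by rw [Function.update_self, hu, Pi.single_eq_of_ne hj.ne]) (hE.2.1 _)
  obtain ⟨a, -, hTa⟩ := exists_le_map_add_smul_sub (fun E hE => colProj_mem_tangents hE)
    deriv_u_colProj
    (map_pencilDeriv_update_le_targets h.mem_entriesLE h.single_mem_rowLE)
    (map_pencilDeriv_update_le_targets h.mem_entriesLE h.smul_splitRow_mem_rowLE)
    (h.targets_le_map_limitDeriv hT)
  have R'_last : R' p = ∅ := by
    have := h.card_subset p p.lt_succ_self
    rw [← Finset.card_eq_zero]
    omega
  have y_last : y (p + 1) = rootsPoly s := by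
    rw [hy, Pi.smul_apply, splitRow_succ p.lt_succ_self, R'_last]
    simp
  refine ⟨u + a • (y - u), ?_, ?_, ?_, fun j hj => ?_, ?_⟩
  · exact add_mem h.single_mem_rowLE
      (Submodule.smul_mem _ a (sub_mem h.smul_splitRow_mem_rowLE h.single_mem_rowLE))
  · simp [u, y, splitRow]
  · simpa [u, y_last] using Lagrange.nodal_ne_zero
  · obtain ⟨j, rfl⟩ := Nat.exists_eq_succ_of_ne_zero (by omega : j ≠ 0)
    have hj : p + 1 ≤ j := Nat.lt_succ_iff.mp hj
    simp [u, y, splitRow, hj.not_gt, show j ≠ p by omega]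
  · rwa [pencilDeriv_update_add_smul (p + 1).lt_succ_self, add_sub_cancel]

lemma IsRootSplitting.exists_row_isUnit_apply_zero [Infinite F]
    (h : IsRootSplitting p m e f S R s R') (h0 : e 0 ≤ f (p + 1))
    (hT : targets (p + 1) m (∑ i ∈ Finset.range (p + 1), (f i - e i))
      (∏ i ∈ Finset.range p, S i (i + 1)) ≤
        (tangents F (p + 1) m e f).map (pencilDeriv F (p + 1) S)) :
    ∃ z ∈ rowLE F m e f (p + 1), IsUnit (z 0) ∧ z (p + 1) ≠ 0 ∧ (∀ j, p + 1 < j → z j = 0) ∧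
      targets (p + 2) m (∑ i ∈ Finset.range (p + 2), (f i - e i))
        (∏ i ∈ Finset.range (p + 1), S i (i + 1)) ≤
          (tangents F (p + 2) m e f).map
            (pencilDeriv F (p + 2) (Function.update S (p + 1) z)) := by
  obtain ⟨z, hz, hz0, hz_last, hz_gt, hTz⟩ := h.exists_row_apply_zero_eq_zero hT
  set ι : ℕ → F[X] := Pi.single 0 1 with hι
  have ι_mem : ι ∈ rowLE F m e f (p + 1) := _root_.single_mem_rowLE <|
    C_mem_intDegreeLE (by rwa [entryBound_of_le (Nat.zero_le _), sub_nonneg]) 1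
  have correction : (tangents F (p + 2) m e f).map
      (pencilDeriv F (p + 2) (Function.update S (p + 1) (z + ι)) -
        pencilDeriv F (p + 2) (Function.update S (p + 1) z)) ≤
      targets (p + 2) m (∑ i ∈ Finset.range (p + 2), (f i - e i))
        (∏ i ∈ Finset.range (p + 1), S i (i + 1)) := by
    rintro _ ⟨E, hE, rfl⟩
    exact sub_mem
      (map_pencilDeriv_update_le_targets h.mem_entriesLE (add_mem hz ι_mem)
        (Submodule.mem_map_of_mem hE))
      (map_pencilDeriv_update_le_targets h.mem_entriesLE hz (Submodule.mem_map_of_mem hE))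
  obtain ⟨b, hb, hTb⟩ := exists_le_map_add_smul hTz correction
  have apply_succ (j : ℕ) : (z + b • ι) (j + 1) = z (j + 1) := by simp [hι]
  refine ⟨z + b • ι, add_mem hz (Submodule.smul_mem _ b ι_mem), ?_, ?_, fun j hj => ?_, ?_⟩
  · simpa [hι, hz0, smul_eq_C_mul] using hb
  · rwa [apply_succ]
  · obtain ⟨j, rfl⟩ := Nat.exists_eq_succ_of_ne_zero (by omega : j ≠ 0)
    rw [apply_succ, hz_gt _ hj]
  · rwa [pencilDeriv_update_add_smul (p + 1).lt_succ_self]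

lemma IsFrame.exists_succ [Infinite F] {k : ℕ} (hS : IsFrame k m e f S R)
    (hk : 0 ≤ f k - e (k + 1) + m) {z : ℕ → F[X]} (hz : z ∈ rowLE F m e f k) (hz0 : IsUnit (z 0))
    (hzk : z k ≠ 0) (hz_gt : ∀ j, k < j → z j = 0) :
    ∃ t, IsFrame (k + 1) m e f (Function.update S k (Function.update z (k + 1) (rootsPoly t)))
      (Function.update R k t) := by
  obtain ⟨t, ht, htR⟩ := exists_finset_card_eq_of_finite hk
    ((Set.finite_Iio k).biUnion fun i _ => (R i).finite_toSet)
  have disjoint_t (i : ℕ) (hi : i < k) : Disjoint t (R i) :=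
    Finset.disjoint_left.mpr fun r hr hri => htR r hr (Set.mem_biUnion hi hri)
  have row_mem : Function.update z (k + 1) (rootsPoly t) ∈ rowLE F m e f k :=
    Set.update_mem_pi_iff_of_mem hz |>.mpr fun _ => rootsPoly_mem_intDegreeLE t
      (by rw [entryBound_of_lt k.lt_succ_self, ht])
  refine ⟨t, update_mem_entriesLE hS.mem_entriesLE row_mem, ?_, ?_, ?_, fun i hi j hj hij => ?_, ?_,
    ?_⟩
  · refine Nat.forall_lt_succ_right.mpr ⟨fun i hi j hj => ?_, fun j hj => ?_⟩
    · rw [Function.update_of_ne hi.ne, hS.eq_zero i hi j hj]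
    · rw [Function.update_self, Function.update_of_ne hj.ne', hz_gt j (by omega)]
  · refine Nat.forall_lt_succ_right.mpr ⟨fun i hi => ?_, ?_⟩
    · rw [Function.update_of_ne hi.ne, Function.update_of_ne hi.ne, hS.superdiag i hi]
    · rw [Function.update_self, Function.update_self, Function.update_self]
  · refine Nat.forall_lt_succ_right.mpr ⟨fun i hi => ?_, ?_⟩
    · rw [Function.update_of_ne hi.ne, hS.card i hi]
    · rw [Function.update_self, ht]
  · rcases Nat.lt_succ_iff_lt_or_eq.mp hi with hi | rfl <;>
      rcases Nat.lt_succ_iff_lt_or_eq.mp hj with hj | rfl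
    · rw [Function.update_of_ne hi.ne, Function.update_of_ne hj.ne]
      exact hS.disjoint i hi j hj hij
    · rw [Function.update_of_ne hi.ne, Function.update_self]
      exact (disjoint_t i hi).symm
    · rw [Function.update_of_ne hj.ne, Function.update_self]
      exact disjoint_t j hj
    · exact absurd rfl hij
  · refine Nat.forall_lt_succ_right.mpr ⟨fun i hi => ?_, ?_⟩
    · rw [Function.update_of_ne hi.ne]
      exact hS.isUnit_col i hi
    · rwa [Function.update_self, Function.update_of_ne (Nat.succ_ne_zero k).symm]
  · refine Nat.forall_lt_succ_right.mpr ⟨fun i hi => ?_, ?_⟩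
    · rw [Function.update_of_ne hi.ne]
      exact hS.diag_ne_zero i hi
    · rwa [Function.update_self, Function.update_of_ne k.lt_succ_self.ne]

lemma exists_isFrame_one [Infinite F] (h0 : e 0 ≤ f 0) (h1 : e 1 - m ≤ f 0) :
    ∃ (S : ℕ → ℕ → F[X]) (R : ℕ → Finset F), IsFrame 1 m e f S R := by
  have isFrame_zero : IsFrame 0 m e f (0 : ℕ → ℕ → F[X]) fun _ => ∅ :=
    ⟨zero_mem _, by simp, by simp, by simp, by simp, by simp, by simp⟩
  obtain ⟨t, ht⟩ := isFrame_zero.exists_succ (z := Pi.single 0 1) (by rw [zero_add]; omega)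
    (single_mem_rowLE <| C_mem_intDegreeLE (by rwa [entryBound_of_le le_rfl, sub_nonneg]) 1)
    (by simp) (by simp) fun j hj => Pi.single_eq_of_ne hj.ne' _
  exact ⟨_, _, ht⟩

lemma exists_isFrame_targets_le_map [Infinite F] (he : Monotone e) (hef : ∀ i, e i ≤ f i)
    (hefm : ∀ i, e (i + 1) - m ≤ f i) (p : ℕ) :
    ∃ (S : ℕ → ℕ → F[X]) (R : ℕ → Finset F), IsFrame (p + 1) m e f S R ∧
      targets (p + 1) m (∑ i ∈ Finset.range (p + 1), (f i - e i))
        (∏ i ∈ Finset.range p, S i (i + 1)) ≤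
          (tangents F (p + 1) m e f).map (pencilDeriv F (p + 1) S) := by
  induction p with
  | zero =>
    obtain ⟨S, R, hS⟩ := exists_isFrame_one (F := F) (hef 0) (hefm 0)
    refine ⟨S, R, hS, ?_⟩
    rw [targets_one]
    exact bot_le
  | succ p ih =>
    obtain ⟨S, R, hS, hT⟩ := ih
    obtain ⟨s, R', h⟩ := hS.exists_isRootSplitting he (hef (p + 1))
    obtain ⟨z, hz, hz0, hz_last, hz_gt, hTz⟩ :=
      h.exists_row_isUnit_apply_zero ((he (Nat.zero_le _)).trans (hef (p + 1))) hT
    have superdiag_nonneg : 0 ≤ f (p + 1) - e (p + 1 + 1) + m := by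
      have := hefm (p + 1)
      omega
    obtain ⟨t, ht⟩ := hS.exists_succ superdiag_nonneg hz hz0 hz_last hz_gt
    refine ⟨_, _, ht, ?_⟩
    rw [Finset.prod_congr rfl fun i hi => by
      rw [Function.update_of_ne (Finset.mem_range.mp hi).ne], pencilDeriv_congr
      (S' := Function.update S (p + 1) z)]
    · exact hTz
    · intro i _ j hj
      rcases eq_or_ne i (p + 1) with rfl | hi
      · rw [Function.update_self, Function.update_self, Function.update_of_ne hj.ne]
      · rw [Function.update_of_ne hi, Function.update_of_ne hi]

end Degeneration

section DualNumber

lemma map_add_smul_of_mul_self_eq_zero {ι R N : Type*} {M : ι → Type*} [Fintype ι]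
    [DecidableEq ι] [CommRing R] [∀ i, AddCommGroup (M i)] [∀ i, Module R (M i)]
    [AddCommGroup N] [Module R N] {ε : R} (hε : ε * ε = 0) (f : MultilinearMap R M N)
    (x h : ∀ i, M i) : f (x + ε • h) = f x + ε • f.linearDeriv x h := by
  have higher_order_terms (s : Finset ι) (hs : 2 ≤ s.card) : f (s.piecewise (ε • h) x) = 0 := by
    have piecewise_eq : s.piecewise (ε • h) x =
        s.piecewise (fun i => ε • s.piecewise h x i) (s.piecewise h x) := by
      funext i
      by_cases hi : i ∈ s <;> simp [hi]
    obtain ⟨d, hd⟩ := Nat.exists_eq_add_of_le hs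
    rw [piecewise_eq, f.map_piecewise_smul, Finset.prod_const, hd, pow_add, sq, hε, zero_mul,
      zero_smul]
  rw [f.map_add_eq_map_add_linearDeriv_add, map_smul,
    Finset.sum_eq_zero fun s hs => higher_order_terms s (Finset.mem_filter.mp hs).2, add_zero]

variable {n R : Type*} [Fintype n] [DecidableEq n] [CommRing R]

lemma det_add_smul_of_mul_self_eq_zero {ε : R} (hε : ε * ε = 0) (M M' : Matrix n n R) :
    (M + ε • M').det = M.det + ε * ∑ i, (M.updateRow i (M' i)).det :=
  (map_add_smul_of_mul_self_eq_zero hε Matrix.detRowAlternating.toMultilinearMap M M').trans <|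
    congrArg (M.det + ε * ·) (MultilinearMap.linearDeriv_apply _ _ _)

open DualNumber TrivSqZeroExt

lemma det_inl_add_eps_mul_inl (M M' : Matrix n n R) :
    (Matrix.of fun i j => (inl (M i j) + ε * inl (M' i j) : R[ε])).det =
      inl M.det + ε * inl (∑ i, (M.updateRow i (M' i)).det) := by
  let φ : R →+* R[ε] := inlHom R R
  have h := det_add_smul_of_mul_self_eq_zero (eps_mul_eps (R := R))
    (φ.mapMatrix M) (φ.mapMatrix M')
  have updateRow_map (i : n) : (φ.mapMatrix M).updateRow i (φ.mapMatrix M' i) =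
      φ.mapMatrix (M.updateRow i (M' i)) :=
    (Matrix.map_updateRow ..).symm
  simp only [updateRow_map, ← RingHom.map_det, ← map_sum] at h
  exact h

lemma det_inl_add_eps_mul_inl_eq_iff {M M' : Matrix n n R} {D : R} :
    (Matrix.of fun i j => (inl (M i j) + ε * inl (M' i j) : R[ε])).det = inl M.det + ε * inl D ↔
      ∑ i, (M.updateRow i (M' i)).det = D := by
  rw [det_inl_add_eps_mul_inl, add_right_inj]
  refine ⟨fun h => ?_, fun h => by rw [h]⟩
  simpa using congrArg snd h

end DualNumber

section AntiTriangular

open Polynomial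

variable {F : Type*} [Field F] {k m : ℕ} {e f : ℕ → ℤ}

/-- The lower anti-triangular matrix `A` of the pair `(A, B)` that corresponds to the array `S`:
the entries of `S` on and below the diagonal, with the columns in reverse order. -/
noncomputable def lowerPart (k : ℕ) (S : ℕ → ℕ → F[X]) : Matrix (Fin k) (Fin k) F[X] :=
  Matrix.of fun r c => if (c.rev : ℕ) ≤ r then S r c.rev else 0

/-- The strictly upper anti-triangular matrix `B` of the pair `(A, B)` that corresponds to the
array `S`: the entries of `S` above the diagonal, with the columns in reverse order. -/
noncomputable def upperPart (k : ℕ) (S : ℕ → ℕ → F[X]) : Matrix (Fin k) (Fin k) F[X] :=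
  Matrix.of fun r c => if (c.rev : ℕ) ≤ r then 0 else S r c.rev

lemma xMat_lowerPart_upperPart (k : ℕ) (S : ℕ → ℕ → F[X]) :
    xMat (lowerPart k S) (upperPart k S) = (pencil k S).submatrix id Fin.revPerm := by
  ext1 r c
  rw [xMat, Matrix.of_apply, Matrix.submatrix_apply, id, Fin.revPerm_apply, lowerPart,
    upperPart, Matrix.of_apply, Matrix.of_apply]
  rcases le_or_gt (c.rev : ℕ) r with h | h
  · rw [if_pos h, if_pos h, pencil_of_le S h, C_0, add_zero, mul_comm]
  · rw [if_neg h.not_ge, if_neg h.not_ge, pencil_of_lt S h, C_0, zero_mul, zero_add]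

lemma sum_det_updateRow_xMat (k : ℕ) (S E : ℕ → ℕ → F[X]) :
    ∑ i, ((xMat (lowerPart k S) (upperPart k S)).updateRow i
      (xMat (lowerPart k E) (upperPart k E) i)).det =
      Equiv.Perm.sign (Fin.revPerm (n := k)) • pencilDeriv F k S E := by
  rw [pencilDeriv_apply, Finset.smul_sum, ← Fin.sum_univ_eq_sum_range fun i =>
    Equiv.Perm.sign (Fin.revPerm (n := k)) • pencilDet k (Function.update S i (E i))]
  refine Finset.sum_congr rfl fun i _ => ?_
  rw [pencilDet, Units.smul_def, zsmul_eq_mul, ← Matrix.det_permute', pencil_update i.2,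
    xMat_lowerPart_upperPart, xMat_lowerPart_upperPart]
  exact congrArg Matrix.det
    (Matrix.submatrix_updateRow_equiv (pencil k S) i (pencil k E i) (Equiv.refl _) Fin.revPerm).symm

lemma isAdmissible_lowerPart_upperPart {S : ℕ → ℕ → F[X]} (hS : S ∈ entriesLE F m e f) :
    IsAdmissible m (fun i : Fin k => e i) (fun i : Fin k => f i) (lowerPart k S)
      (upperPart k S) := by
  have coeff_eq_zero {i j n : ℕ} (h : entryBound m e f i j < n) : (S i j).coeff n = 0 :=
    mem_rowLE.mp (mem_entriesLE.mp hS i) j n h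
  refine ⟨fun r c n hn => ?_, fun r c n hn => ?_, fun r c h => ?_, fun r c h => ?_⟩
  · rw [lowerPart, Matrix.of_apply]
    split_ifs with h
    · exact coeff_eq_zero (by rwa [entryBound_of_le h])
    · exact coeff_zero n
  · rw [upperPart, Matrix.of_apply]
    split_ifs with h
    · exact coeff_zero n
    · exact coeff_eq_zero (by rwa [entryBound_of_lt (not_le.mp h)])
  · exact if_neg (by rw [Fin.val_rev]; omega)
  · exact if_pos (by rw [Fin.val_rev]; omega)

lemma lowerPart_of_add_eq (S : ℕ → ℕ → F[X]) {i j : Fin k} (h : (i : ℕ) + j = k - 1) :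
    lowerPart k S i j = S i i := by
  have hj : (j.rev : ℕ) = i := by rw [Fin.val_rev]; omega
  rw [lowerPart, Matrix.of_apply, hj, if_pos le_rfl]

lemma upperPart_of_add_eq (hk : 2 ≤ k) (S : ℕ → ℕ → F[X]) {i j : Fin k}
    (h : (i : ℕ) + j = k - 2) : upperPart k S i j = S i (i + 1) := by
  have hj : (j.rev : ℕ) = i + 1 := by rw [Fin.val_rev]; omega
  rw [upperPart, Matrix.of_apply, hj, if_neg (by omega)]

/-- The array whose lower and upper parts are `A` and `B`, extended by zero beyond the leading
`k × k` block. -/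
noncomputable def arrayOfParts (A B : Matrix (Fin k) (Fin k) F[X]) (i j : ℕ) : F[X] :=
  if h : i < k ∧ j < k then A ⟨i, h.1⟩ (Fin.rev ⟨j, h.2⟩) + B ⟨i, h.1⟩ (Fin.rev ⟨j, h.2⟩) else 0

lemma arrayOfParts_of_le (A B : Matrix (Fin k) (Fin k) F[X]) {i j : ℕ} (h : k ≤ i ∨ k ≤ j) :
    arrayOfParts A B i j = 0 :=
  dif_neg (by omega)

section IsAdmissible

variable {A B : Matrix (Fin k) (Fin k) F[X]}

lemma IsAdmissible.arrayOfParts_lower {e f : Fin k → ℤ} (h : IsAdmissible m e f A B) {i j : Fin k}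
    (hij : (j : ℕ) ≤ i) : arrayOfParts A B i j = A i j.rev := by
  rw [arrayOfParts, dif_pos ⟨i.2, j.2⟩, h.2.2.2 i j.rev (by rw [Fin.val_rev]; omega), add_zero]

lemma IsAdmissible.arrayOfParts_upper {e f : Fin k → ℤ} (h : IsAdmissible m e f A B) {i j : Fin k}
    (hij : (i : ℕ) < j) : arrayOfParts A B i j = B i j.rev := by
  rw [arrayOfParts, dif_pos ⟨i.2, j.2⟩, h.2.2.1 i j.rev (by rw [Fin.val_rev]; omega), zero_add]

lemma IsAdmissible.lowerPart_arrayOfParts {e f : Fin k → ℤ} (h : IsAdmissible m e f A B) :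
    lowerPart k (arrayOfParts A B) = A := by
  ext1 r c
  rw [lowerPart, Matrix.of_apply]
  split_ifs with hrc
  · rw [h.arrayOfParts_lower hrc, Fin.rev_rev]
  · exact (h.2.2.1 r c (by rw [Fin.val_rev] at hrc; omega)).symm

lemma IsAdmissible.upperPart_arrayOfParts {e f : Fin k → ℤ} (h : IsAdmissible m e f A B) :
    upperPart k (arrayOfParts A B) = B := by
  ext1 r c
  rw [upperPart, Matrix.of_apply]
  split_ifs with hrc
  · exact (h.2.2.2 r c (by rw [Fin.val_rev] at hrc; omega)).symm
  · rw [h.arrayOfParts_upper (not_le.mp hrc), Fin.rev_rev]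

lemma IsAdmissible.arrayOfParts_mem_entriesLE
    (h : IsAdmissible m (fun i : Fin k => e i) (fun i : Fin k => f i) A B) :
    arrayOfParts A B ∈ entriesLE F m e f := by
  refine mem_entriesLE.mpr fun i => mem_rowLE.mpr fun j n hn => ?_
  by_cases hij : k ≤ i ∨ k ≤ j
  · rw [arrayOfParts_of_le A B hij, coeff_zero]
  obtain ⟨hi, hj⟩ : i < k ∧ j < k := by omega
  rcases le_or_gt j i with hji | hji
  · rw [entryBound_of_le hji] at hn
    rw [h.arrayOfParts_lower (i := ⟨i, hi⟩) (j := ⟨j, hj⟩) hji]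
    exact h.1 _ _ n (by rwa [Fin.rev_rev])
  · rw [entryBound_of_lt hji] at hn
    rw [h.arrayOfParts_upper (i := ⟨i, hi⟩) (j := ⟨j, hj⟩) hji]
    exact h.2.1 _ _ n (by rwa [Fin.rev_rev])

lemma IsAdmissible.arrayOfParts_mem_tangents
    (h : IsAdmissible m (fun i : Fin k => e i) (fun i : Fin k => f i) A B)
    (hA : ∀ i j : Fin k, (i : ℕ) + j = k - 1 → A i j = 0)
    (hB : ∀ i j : Fin k, (i : ℕ) + j = k - 2 → B i j = 0) :
    arrayOfParts A B ∈ tangents F k m e f := by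
  refine ⟨h.arrayOfParts_mem_entriesLE, fun i => ?_, fun i => ?_, fun i j => arrayOfParts_of_le A B⟩
  · rcases le_or_gt k i with hi | hi
    · exact arrayOfParts_of_le A B (.inl hi)
    · exact (h.arrayOfParts_lower (i := ⟨i, hi⟩) (j := ⟨i, hi⟩) le_rfl).trans
        (hA _ _ (by simp only [Fin.val_rev]; omega))
  · rcases le_or_gt k (i + 1) with hi | hi
    · exact arrayOfParts_of_le A B (.inr hi)
    · exact (h.arrayOfParts_upper (i := ⟨i, by omega⟩) (j := ⟨i + 1, hi⟩) i.lt_succ_self).trans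
        (hB _ _ (by simp only [Fin.val_rev]; omega))

end IsAdmissible

lemma mem_targets_iff {δ : ℤ} {b : F[X]} {P : F[X][X]} :
    P ∈ targets k m δ b ↔ P.coeff 0 = 0 ∧ (∀ j : ℕ, k ≤ j → P.coeff j = 0) ∧
      (∀ j : ℕ, 1 ≤ j → j ≤ k → ∀ n : ℕ, δ + (((k - j) * m : ℕ) : ℤ) < (n : ℤ) →
        (P.coeff j).coeff n = 0) ∧ b ∣ P.coeff 1 := by
  refine and_congr_right fun h0 => and_congr_right fun hk => and_congr_left fun _ => ?_
  have bound_eq {j : ℕ} (hj : j ≤ k) :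
      δ + (((k - j) * m : ℕ) : ℤ) = δ + k * m - j * m := by
    rw [Nat.cast_mul, Nat.cast_sub hj]
    ring
  refine ⟨fun h j _ hj n hn => h j n (by rwa [← bound_eq hj]), fun h j n hn => ?_⟩
  rcases Nat.eq_zero_or_pos j with rfl | hj
  · rw [h0, coeff_zero]
  · rcases le_total k j with hkj | hkj
    · rw [hk j hkj, coeff_zero]
    · exact h j hj hkj n (by rwa [bound_eq hkj])

lemma exists_isAdmissible_det_eq_iff (S : ℕ → ℕ → F[X]) {D : F[X][X]} :
    (∃ A B : Matrix (Fin k) (Fin k) F[X],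
      IsAdmissible m (fun i : Fin k => e i) (fun i : Fin k => f i) A B ∧
      (∀ i j : Fin k, (i : ℕ) + j = k - 1 → A i j = 0) ∧
      (∀ i j : Fin k, (i : ℕ) + j = k - 2 → B i j = 0) ∧
      (Matrix.of fun r c => (TrivSqZeroExt.inl (xMat (lowerPart k S) (upperPart k S) r c) +
        DualNumber.eps * TrivSqZeroExt.inl (xMat A B r c) : DualNumber F[X][X])).det =
        TrivSqZeroExt.inl (xMat (lowerPart k S) (upperPart k S)).det +
          DualNumber.eps * TrivSqZeroExt.inl D) ↔
      D ∈ (tangents F k m e f).map (pencilDeriv F k S) := by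
  simp only [det_inl_add_eps_mul_inl_eq_iff]
  set s := Equiv.Perm.sign (Fin.revPerm (n := k)) with hs
  constructor
  · rintro ⟨A, B, hAB, hA, hB, rfl⟩
    obtain ⟨E, hE, rfl, rfl⟩ : ∃ E ∈ tangents F k m e f, lowerPart k E = A ∧ upperPart k E = B :=
      ⟨arrayOfParts A B, hAB.arrayOfParts_mem_tangents hA hB, hAB.lowerPart_arrayOfParts,
        hAB.upperPart_arrayOfParts⟩
    rw [sum_det_updateRow_xMat, Submodule.smul_mem_iff']
    exact Submodule.mem_map_of_mem hE
  · intro hD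
    obtain ⟨E, ⟨hE, diag, superdiag, -⟩, hED⟩ := (Submodule.smul_mem_iff' _ s).mpr hD
    refine ⟨lowerPart k E, upperPart k E, isAdmissible_lowerPart_upperPart hE,
      fun i j h => ?_, fun i j h => ?_, ?_⟩
    · rw [lowerPart_of_add_eq E h, diag]
    · rcases lt_or_ge k 2 with hk | hk
      · obtain rfl : k = 1 := by have := i.2; omega
        rw [upperPart, Matrix.of_apply, if_pos (by omega)]
      · rw [upperPart_of_add_eq hk E h, superdiag]
    · rw [sum_det_updateRow_xMat, ← hs, hED, smul_smul, Int.units_mul_self, one_smul]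

end AntiTriangular

lemma exists_nat_extension {k m : ℕ} {e f : Fin k → ℤ} (hk : k ≠ 0) (he : Monotone e)
    (hef : ∀ i, e i ≤ f i)
    (hefm : ∀ i : Fin k, ∀ h : (i : ℕ) + 1 < k, e ⟨(i : ℕ) + 1, h⟩ - (m : ℤ) ≤ f i) :
    ∃ e' f' : ℕ → ℤ, (∀ i : Fin k, e' i = e i) ∧ (∀ i : Fin k, f' i = f i) ∧ Monotone e' ∧
      (∀ i, e' i ≤ f' i) ∧ ∀ i, e' (i + 1) - m ≤ f' i := by
  let clamp (i : ℕ) : Fin k := ⟨min i (k - 1), by omega⟩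
  have clamp_val (i : Fin k) : clamp i = i := Fin.ext (min_eq_left (by omega))
  refine ⟨e ∘ clamp, f ∘ clamp, fun i => congrArg e (clamp_val i),
    fun i => congrArg f (clamp_val i),
    he.comp fun i j hij => Fin.mk_le_mk.mpr (min_le_min_right _ hij),
    fun i => hef _, fun i => ?_⟩
  rcases lt_or_ge (i + 1) k with hi | hi
  · have := hefm ⟨i, by omega⟩ hi
    rwa [Function.comp_apply, Function.comp_apply, clamp_val ⟨i + 1, hi⟩, clamp_val ⟨i, by omega⟩]
  · have clamp_succ : clamp (i + 1) = clamp i := Fin.ext (show min _ _ = min _ _ by omega)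
    rw [Function.comp_apply, clamp_succ]
    exact (sub_le_self _ m.cast_nonneg).trans (hef _)

theorem stmt_19_general {F : Type*} [Field F] [Infinite F] (k : ℕ) (hk : 1 < k) (m : ℕ)
    (e f : Fin k → ℤ) (he : Monotone e) (hef : ∀ i, e i ≤ f i)
    (hefm : ∀ i : Fin k, ∀ h : (i : ℕ) + 1 < k, e ⟨(i : ℕ) + 1, h⟩ - (m : ℤ) ≤ f i)
    (δ : ℤ) (hδ : δ = ∑ i, (f i - e i)) :
    ∃ A B : Matrix (Fin k) (Fin k) (Polynomial F),
      IsAdmissible m e f A B ∧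
      (∀ i j : Fin k, (i : ℕ) + (j : ℕ) = k - 2 → B i j ≠ 0) ∧
      (∀ D : Polynomial (Polynomial F),
        (∃ A' B' : Matrix (Fin k) (Fin k) (Polynomial F),
          IsAdmissible m e f A' B' ∧
          (∀ i j : Fin k, (i : ℕ) + (j : ℕ) = k - 1 → A' i j = 0) ∧
          (∀ i j : Fin k, (i : ℕ) + (j : ℕ) = k - 2 → B' i j = 0) ∧
          Matrix.det (Matrix.of fun r c : Fin k =>
              (TrivSqZeroExt.inl (xMat A B r c) +
                DualNumber.eps * TrivSqZeroExt.inl (xMat A' B' r c) :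
                  DualNumber (Polynomial (Polynomial F)))) =
            TrivSqZeroExt.inl (Matrix.det (xMat A B)) +
              DualNumber.eps * TrivSqZeroExt.inl D) ↔
        (D.coeff 0 = 0 ∧
          (∀ j : ℕ, k ≤ j → D.coeff j = 0) ∧
          (∀ j : ℕ, 1 ≤ j → j ≤ k → ∀ n : ℕ, δ + (((k - j) * m : ℕ) : ℤ) < (n : ℤ) →
            (D.coeff j).coeff n = 0) ∧
          (∏ i : Fin (k - 1),
              B (i.castLE (k.sub_le 1)) ⟨k - 2 - (i : ℕ), by omega⟩) ∣
            D.coeff 1)) := by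
  obtain ⟨e', f', he_eq, hf_eq, he', hef', hefm'⟩ := exists_nat_extension (by omega) he hef hefm
  obtain rfl := funext he_eq
  obtain rfl := funext hf_eq
  obtain ⟨p, rfl⟩ := Nat.exists_eq_add_of_le' (by omega : 1 ≤ k)
  rw [Fin.sum_univ_eq_sum_range fun i => f' i - e' i] at hδ
  obtain ⟨S, R, hS, targets_le⟩ := exists_isFrame_targets_le_map (F := F) he' hef' hefm' p
  have prod_superdiag : ∏ i : Fin p, upperPart (p + 1) S ⟨i, by omega⟩ ⟨p + 1 - 2 - i, by omega⟩ =
      ∏ i ∈ Finset.range p, S i (i + 1) := by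
    rw [← Fin.prod_univ_eq_prod_range fun i => S i (i + 1)]
    exact Finset.prod_congr rfl fun i _ => upperPart_of_add_eq hk S (by dsimp only; omega)
  refine ⟨lowerPart (p + 1) S, upperPart (p + 1) S,
    isAdmissible_lowerPart_upperPart hS.mem_entriesLE, fun i j h => ?_, fun D => ?_⟩
  · rw [upperPart_of_add_eq hk S h, hS.superdiag i i.2]
    exact Lagrange.nodal_ne_zero
  · rw [exists_isAdmissible_det_eq_iff,
      (map_pencilDeriv_le_targets hS.mem_entriesLE).antisymm targets_le, ← hδ, mem_targets_iff,
      ← prod_superdiag]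
    rfl

/-- Lemma 3.8 (existence form): there is an admissible pair `(A, B)` with all entries
`B i (k-i)` (`1`-indexed, i.e. `i + j = k - 2` `0`-indexed) nonzero such that the set of
derivatives `D(A', B')` of the determinant map at `(A, B)` in restricted tangent directions
`(A', B')` — characterized by `det ((A+εA')x + (B+εB')) = det (Ax+B) + ε·D` in the dual
numbers over `F[t][x]` — is exactly the set of polynomials `Σ_{j=1}^k P_j x^j` with
`deg P_j ≤ δ + (k-j)·m`, `P_k = 0`, and `∏_{i=1}^{k-1} B i (k-i)` dividing `P_1`. -/
theorem stmt_19 {F : Type*} [Field F] [IsAlgClosed F] (k : ℕ) (hk : 2 ≤ k) (m : ℕ)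
    (e f : Fin k → ℤ) (he : Monotone e) (hf : Monotone f)
    (hef : ∀ i, e i ≤ f i)
    (hefm : ∀ i : Fin k, ∀ h : (i : ℕ) + 1 < k, e ⟨(i : ℕ) + 1, h⟩ - (m : ℤ) ≤ f i)
    (δ : ℤ) (hδ : δ = ∑ i, (f i - e i)) :
    ∃ A B : Matrix (Fin k) (Fin k) (Polynomial F),
      IsAdmissible m e f A B ∧
      (∀ i j : Fin k, (i : ℕ) + (j : ℕ) = k - 2 → B i j ≠ 0) ∧
      (∀ D : Polynomial (Polynomial F),
        (∃ A' B' : Matrix (Fin k) (Fin k) (Polynomial F),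
          IsAdmissible m e f A' B' ∧
          (∀ i j : Fin k, (i : ℕ) + (j : ℕ) = k - 1 → A' i j = 0) ∧
          (∀ i j : Fin k, (i : ℕ) + (j : ℕ) = k - 2 → B' i j = 0) ∧
          Matrix.det (Matrix.of fun r c : Fin k =>
              (TrivSqZeroExt.inl (xMat A B r c) +
                DualNumber.eps * TrivSqZeroExt.inl (xMat A' B' r c) :
                  DualNumber (Polynomial (Polynomial F)))) =
            TrivSqZeroExt.inl (Matrix.det (xMat A B)) +
              DualNumber.eps * TrivSqZeroExt.inl D) ↔
        (D.coeff 0 = 0 ∧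
          (∀ j : ℕ, k ≤ j → D.coeff j = 0) ∧
          (∀ j : ℕ, 1 ≤ j → j ≤ k → ∀ n : ℕ, δ + (((k - j) * m : ℕ) : ℤ) < (n : ℤ) →
            (D.coeff j).coeff n = 0) ∧
          (∏ i : Fin (k - 1),
              B ⟨(i : ℕ), by have := i.isLt; omega⟩ ⟨k - 2 - (i : ℕ), by omega⟩) ∣
            D.coeff 1)) := by
  exact stmt_19_general k hk m e f he hef hefm δ hδ
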